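/- arXiv:2201.10418 — 2 statements merged into one kernel-verified Lean document; each statement's English description precedes it below -/
import Mathlib

section
/- Let n ≥ 3 and let A have m alternatives. There is no strategyproof SDS that is α-Condorcet-consistent for any α > 2/m. -/
open Finset

noncomputable section

/-- A preference profile: each voter's strict linear order on the `m`
alternatives is encoded as a ranking permutation, where `R i x` is the rank of
alternative `x` for voter `i` (rank `0` = most preferred). Voter `i` strictly
prefers `x` to `y` iff `R i x < R i y`. -/
abbrev Profile (n m : ℕ) := Fin n → Equiv.Perm (Fin m)

/-- `F R x` is the probability that the social decision scheme `F` assigns to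
alternative `x` at profile `R`; `IsSDS F` says every `F R` is a lottery. -/
def IsSDS {n m : ℕ} (F : Profile n m → Fin m → ℝ) : Prop :=
  (∀ R x, 0 ≤ F R x) ∧ ∀ R, ∑ x, F R x = 1

/-- Stochastic-dominance preference of voter `i` (with preferences as in `R`):
lottery `p` is weakly preferred to lottery `q`. -/
def SDPref {n m : ℕ} (R : Profile n m) (i : Fin n) (p q : Fin m → ℝ) : Prop :=
  ∀ x : Fin m,
    ∑ y ∈ univ.filter (fun y => R i y < R i x), q y ≤
      ∑ y ∈ univ.filter (fun y => R i y < R i x), p y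

/-- Strategyproofness: the truthful outcome is SD-preferred to any outcome
obtainable by a unilateral deviation. -/
def Strategyproof {n m : ℕ} (F : Profile n m → Fin m → ℝ) : Prop :=
  ∀ (R R' : Profile n m) (i : Fin n),
    (∀ j, j ≠ i → R j = R' j) → SDPref R i (F R) (F R')

/-- Anonymity: permuting the voters does not change the outcome. -/
def Anonymous {n m : ℕ} (F : Profile n m → Fin m → ℝ) : Prop :=
  ∀ (π : Equiv.Perm (Fin n)) (R : Profile n m), F (fun i => R (π i)) = F R

/-- The profile obtained from `R` by relabeling the alternatives by `τ`
(in `relabel τ R`, alternative `τ x` gets the rank that `x` has in `R`). -/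
def relabel {n m : ℕ} (τ : Equiv.Perm (Fin m)) (R : Profile n m) : Profile n m :=
  fun i => τ.symm.trans (R i)

/-- Neutrality: relabeling the alternatives permutes the outcome accordingly. -/
def Neutral {n m : ℕ} (F : Profile n m → Fin m → ℝ) : Prop :=
  ∀ (τ : Equiv.Perm (Fin m)) (R : Profile n m) (x : Fin m),
    F (relabel τ R) (τ x) = F R x

/-- The supporting size `n_{xy}(R)`: the number of voters preferring `x` to `y`. -/
def suppSize {n m : ℕ} (R : Profile n m) (x y : Fin m) : ℕ :=
  (univ.filter (fun i => R i x < R i y)).card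

/-- `x` is the Condorcet winner of `R`. -/
def CondorcetWinner {n m : ℕ} (R : Profile n m) (x : Fin m) : Prop :=
  ∀ y, y ≠ x → suppSize R y x < suppSize R x y

/-- `α`-Condorcet-consistency. -/
def CondorcetConsistent {n m : ℕ} (F : Profile n m → Fin m → ℝ) (α : ℝ) : Prop :=
  ∀ R x, CondorcetWinner R x → α ≤ F R x

/-- `x` is Pareto-dominated in `R`. -/
def ParetoDominated {n m : ℕ} (R : Profile n m) (x : Fin m) : Prop :=
  ∃ y, ∀ i, R i y < R i x

/-- `β`-ex post efficiency. -/
def ExPostEff {n m : ℕ} (F : Profile n m → Fin m → ℝ) (β : ℝ) : Prop :=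
  ∀ R x, ParetoDominated R x → F R x ≤ β

/-- The probability that the dictatorial SDS of voter `i` assigns to `x`:
`1` if `x` is voter `i`'s most preferred alternative and `0` otherwise. -/
def dictProb {n m : ℕ} (R : Profile n m) (i : Fin n) (x : Fin m) : ℝ :=
  if ∀ y, R i x ≤ R i y then 1 else 0

/-- `d` is a random dictatorship. -/
def IsRandDict {n m : ℕ} (d : Profile n m → Fin m → ℝ) : Prop :=
  ∃ δ : Fin n → ℝ, (∀ i, 0 ≤ δ i) ∧ ∑ i, δ i = 1 ∧
    ∀ R x, d R x = ∑ i, δ i * dictProb R i x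

/-- `F` can be written as `γ d + (1 - γ) g` with `d` a random dictatorship and
`g` a strategyproof SDS. -/
def DecomposesAt {n m : ℕ} (F : Profile n m → Fin m → ℝ) (γ : ℝ) : Prop :=
  ∃ d g : Profile n m → Fin m → ℝ, IsRandDict d ∧ IsSDS g ∧ Strategyproof g ∧
    ∀ R x, F R x = γ * d R x + (1 - γ) * g R x

/-- `F` is `γ`-randomly dictatorial: `γ ∈ [0,1]` is the maximal value admitting
a decomposition `F = γ d + (1 - γ) g` as above. -/
def RandDictDegree {n m : ℕ} (F : Profile n m → Fin m → ℝ) (γ : ℝ) : Prop :=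
  0 ≤ γ ∧ γ ≤ 1 ∧ DecomposesAt F γ ∧
    ∀ γ', 0 ≤ γ' → γ' ≤ 1 → DecomposesAt F γ' → γ' ≤ γ

/-- The profile `R^{i:yx}` obtained from `R` by swapping `x` and `y` in voter
`i`'s preference relation (used when `x` is ranked directly above `y`). -/
def swapTop {n m : ℕ} (R : Profile n m) (i : Fin n) (x y : Fin m) : Profile n m :=
  Function.update R i ((R i).trans (Equiv.swap (R i x) (R i y)))

/-- The weight vector `b` defining the randomized Copeland rule:
`b k = 2/(m(m-1))` for `k > n/2`, `b k = 1/(m(m-1))` for `k = n/2`, `b k = 0`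
for `k < n/2`. -/
def copelandWeight (n m : ℕ) (k : ℕ) : ℝ :=
  if n < 2 * k then 2 / ((m : ℝ) * ((m : ℝ) - 1))
  else if 2 * k = n then 1 / ((m : ℝ) * ((m : ℝ) - 1))
  else 0

/-- The randomized Copeland rule `f_C(R, x) = ∑_{y ≠ x} b_{n_{xy}(R)}`. -/
def randCopeland (n m : ℕ) : Profile n m → Fin m → ℝ :=
  fun R x => ∑ y ∈ univ.filter (fun y => y ≠ x), copelandWeight n m (suppSize R x y)

/-- A point voting SDS, given by a scoring vector `a` (indexed by ranks
`0, …, m-1`, i.e. `a k` is the score of the `(k+1)`-st ranked alternative). -/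
structure PointVoting (n m : ℕ) where
  a : ℕ → ℝ
  mono : ∀ k l : ℕ, k ≤ l → l < m → a l ≤ a k
  nonneg : ∀ k : ℕ, k < m → 0 ≤ a k
  sum_eq : ∑ k ∈ Finset.range m, a k = 1 / (n : ℝ)

/-- The value of a point voting SDS. -/
def pvVal {n m : ℕ} (pv : PointVoting n m) : Profile n m → Fin m → ℝ :=
  fun R x => ∑ i, pv.a (R i x : ℕ)

/-- A supporting size SDS, given by a vector `b` indexed by supporting sizes
`0, …, n`. -/
structure SupportingSize (n m : ℕ) where
  b : ℕ → ℝ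
  mono : ∀ k l : ℕ, k ≤ l → l ≤ n → b k ≤ b l
  nonneg : ∀ k : ℕ, k ≤ n → 0 ≤ b k
  pair_eq : ∀ k : ℕ, k ≤ n → b k + b (n - k) = 2 / ((m : ℝ) * ((m : ℝ) - 1))

/-- The value of a supporting size SDS. -/
def ssVal {n m : ℕ} (S : SupportingSize n m) : Profile n m → Fin m → ℝ :=
  fun R x => ∑ y ∈ univ.filter (fun y => y ≠ x), S.b (suppSize R x y)

/-- A duple: a strategyproof SDS that puts positive probability on at most two
fixed alternatives. -/
def IsDuple {n m : ℕ} (g : Profile n m → Fin m → ℝ) : Prop :=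
  IsSDS g ∧ Strategyproof g ∧ ∃ x y : Fin m, ∀ R z, z ≠ x → z ≠ y → g R z = 0

/-- A unilateral: a strategyproof SDS that depends only on the preferences of a
single fixed voter. -/
def IsUnilateral {n m : ℕ} (g : Profile n m → Fin m → ℝ) : Prop :=
  IsSDS g ∧ Strategyproof g ∧
    ∃ i : Fin n, ∀ R R' : Profile n m, R i = R' i → g R = g R'

/-- `F` is a convex combination of SDSs satisfying the property `P`. -/
def MixOf {n m : ℕ} (P : (Profile n m → Fin m → ℝ) → Prop)
    (F : Profile n m → Fin m → ℝ) : Prop :=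
  ∃ (K : ℕ) (w : Fin K → ℝ) (g : Fin K → Profile n m → Fin m → ℝ),
    (∀ k, 0 ≤ w k) ∧ ∑ k, w k = 1 ∧ (∀ k, P (g k)) ∧
    ∀ R x, F R x = ∑ k, w k * g k R x

/-- The uniform random dictatorship. -/
def uniformRD (n m : ℕ) : Profile n m → Fin m → ℝ :=
  fun R x => (1 / (n : ℝ)) * ∑ i, dictProb R i x

/-- The uniform lottery. -/
def uniformLottery (n m : ℕ) : Profile n m → Fin m → ℝ :=
  fun _ _ => 1 / (m : ℝ)


lemma sdp_prefix {n m : ℕ} {F : Profile n m → Fin m → ℝ} (h1 : IsSDS F) (h2 : Strategyproof F)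
    (R R' : Profile n m) (i : Fin n) (hR : ∀ j, j ≠ i → R j = R' j) (k : ℕ) :
    ∑ z ∈ univ.filter (fun z => (R i z : ℕ) < k), F R' z ≤
      ∑ z ∈ univ.filter (fun z => (R i z : ℕ) < k), F R z := by
  by_cases hk : k < m
  · have := h2 R R' i hR ((R i).symm ⟨k, hk⟩)
    simpa [Fin.lt_def] using this
  · have e : univ.filter (fun z => (R i z : ℕ) < k) = univ := by
      ext z; simp; have := (R i z).2; omega
    rw [e, h1.2, h1.2]

lemma prefix_eq {n m : ℕ} {F : Profile n m → Fin m → ℝ} (h1 : IsSDS F) (h2 : Strategyproof F)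
    (R R' : Profile n m) (i : Fin n) (hR : ∀ j, j ≠ i → R j = R' j) (k : ℕ)
    (hk : ∀ z, (R i z : ℕ) < k ↔ (R' i z : ℕ) < k) :
    ∑ z ∈ univ.filter (fun z => (R i z : ℕ) < k), F R' z =
      ∑ z ∈ univ.filter (fun z => (R i z : ℕ) < k), F R z := by
  apply le_antisymm (sdp_prefix h1 h2 R R' i hR k)
  have := sdp_prefix h1 h2 R' R i (fun j hj => (hR j hj).symm) k
  simpa [← hk] using this

lemma rank_card {m : ℕ} (e : Equiv.Perm (Fin m)) (x : Fin m) :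
    (e x : ℕ) = (univ.filter (fun z => e z < e x)).card := by
  have : univ.filter (fun z => e z < e x) = (Finset.Iio (e x)).map e.symm.toEmbedding := by
    ext z; simp
  rw [this]; simp

lemma filter_succ {m : ℕ} (e : Equiv.Perm (Fin m)) (x : Fin m) (f : Fin m → ℝ) :
    ∑ z ∈ univ.filter (fun z => (e z : ℕ) < (e x : ℕ) + 1), f z =
     ∑ z ∈ univ.filter (fun z => (e z : ℕ) < (e x : ℕ)), f z + f x := by
  have : univ.filter (fun z => (e z : ℕ) < (e x : ℕ) + 1) =
      insert x (univ.filter (fun z => (e z : ℕ) < (e x : ℕ))) := by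
    ext z
    simp only [mem_filter, mem_univ, true_and, mem_insert]
    constructor
    · intro h
      rcases Nat.lt_succ_iff_lt_or_eq.mp h with h | h
      · exact Or.inr h
      · exact Or.inl (e.injective (Fin.ext h))
    · rintro (rfl | h) <;> omega
  rw [this, sum_insert (by simp)]; ring

lemma sinv_one {n m : ℕ} {F : Profile n m → Fin m → ℝ} (h1 : IsSDS F) (h2 : Strategyproof F)
    (R R' : Profile n m) (i : Fin n) (hR : ∀ j, j ≠ i → R j = R' j) (x : Fin m)
    (hx : ∀ z, R i z < R i x ↔ R' i z < R' i x) : F R x = F R' x := by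
  have hr : (R i x : ℕ) = R' i x := by
    rw [rank_card, rank_card]; simp [hx]
  have hx' : ∀ z, (R i z : ℕ) < R i x ↔ (R' i z : ℕ) < R i x := by
    intro z; have := hx z; rw [Fin.lt_def, Fin.lt_def] at this; rw [this, hr]
  have hx1 : ∀ z, (R i z : ℕ) < R i x + 1 ↔ (R' i z : ℕ) < R i x + 1 := by
    intro z
    have a := hx' z
    by_cases hz : z = x
    · subst hz; omega
    · have b : (R i z : ℕ) ≠ R i x := fun h => hz ((R i).injective (Fin.ext h))
      have c : (R' i z : ℕ) ≠ R' i x := fun h => hz ((R' i).injective (Fin.ext h))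
      omega
  have a := prefix_eq h1 h2 R R' i hR _ hx'
  have b := prefix_eq h1 h2 R R' i hR _ hx1
  rw [filter_succ, filter_succ] at b
  linarith

lemma sw_at {n m : ℕ} (R : Profile n m) (i : Fin n) (x y z : Fin m) :
    swapTop R i x y i z = Equiv.swap (R i x) (R i y) (R i z) := by
  simp [swapTop]

lemma sw_x {n m : ℕ} (R : Profile n m) (i : Fin n) (x y : Fin m) :
    swapTop R i x y i x = R i y := by simp [sw_at]

lemma sw_y {n m : ℕ} (R : Profile n m) (i : Fin n) (x y : Fin m) :
    swapTop R i x y i y = R i x := by simp [sw_at]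

lemma sw_z {n m : ℕ} (R : Profile n m) (i : Fin n) {x y z : Fin m} (hx : z ≠ x) (hy : z ≠ y) :
    swapTop R i x y i z = R i z := by
  rw [sw_at, Equiv.swap_apply_of_ne_of_ne] <;> simpa

lemma sw_ne {n m : ℕ} (R : Profile n m) (i j : Fin n) (x y : Fin m) (h : j ≠ i) :
    swapTop R i x y j = R j := by simp [swapTop, h]

lemma sw_sw {n m : ℕ} (R : Profile n m) (i : Fin n) (x y : Fin m) :
    swapTop (swapTop R i x y) i y x = R := by
  ext j z
  by_cases h : j = i
  · subst h
    rw [sw_at, sw_x, sw_y, sw_at]; simp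
  · rw [sw_ne _ _ _ _ _ h, sw_ne _ _ _ _ _ h]

lemma rank_ne {m : ℕ} (e : Equiv.Perm (Fin m)) {x z : Fin m} (h : z ≠ x) : (e z : ℕ) ≠ e x :=
  fun h' => h (e.injective (Fin.ext h'))

/-- comparisons other than x,y are unaffected by an adjacent swap -/
lemma sw_lt {n m : ℕ} (R : Profile n m) (i : Fin n) {x y : Fin m}
    (h : (R i y : ℕ) = R i x + 1) (a b : Fin m) (h1 : ¬ (a = x ∧ b = y)) (h2 : ¬ (a = y ∧ b = x))
    (j : Fin n) :
    swapTop R i x y j a < swapTop R i x y j b ↔ R j a < R j b := by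
  by_cases hj : j = i
  · subst hj
    have hxy : x ≠ y := by rintro rfl; omega
    rw [Fin.lt_def, Fin.lt_def]
    by_cases hax : a = x
    · subst hax
      by_cases hb : b = a
      · subst hb; simp
      · have hby : b ≠ y := fun h => h1 ⟨rfl, h⟩
        rw [sw_x, sw_z R j hb hby]
        have := rank_ne (R j) hb; have := rank_ne (R j) hby
        omega
    · by_cases hay : a = y
      · subst hay
        by_cases hb : b = a
        · subst hb; simp
        · have hby : b ≠ x := fun h => h2 ⟨rfl, h⟩
          rw [sw_y, sw_z R j hby hb]
          have := rank_ne (R j) hb; have := rank_ne (R j) hby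
          omega
      · rw [sw_z R j hax hay]
        have := rank_ne (R j) hax; have := rank_ne (R j) hay
        by_cases hbx : b = x
        · subst hbx; rw [sw_x]; omega
        · by_cases hby : b = y
          · subst hby; rw [sw_y]; omega
          · rw [sw_z R j hbx hby]
  · rw [sw_ne _ _ _ _ _ hj]

lemma swF_other {n m : ℕ} {F : Profile n m → Fin m → ℝ} (h1 : IsSDS F) (h2 : Strategyproof F)
    (R : Profile n m) (i : Fin n) {x y : Fin m} (h : (R i y : ℕ) = R i x + 1) {z : Fin m}
    (hx : z ≠ x) (hy : z ≠ y) : F (swapTop R i x y) z = F R z := by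
  apply sinv_one h1 h2 _ _ i (fun j hj => sw_ne _ _ _ _ _ hj)
  intro w
  exact sw_lt R i h w z (by tauto) (by tauto) i

lemma swF_sum {n m : ℕ} {F : Profile n m → Fin m → ℝ} (h1 : IsSDS F) (h2 : Strategyproof F)
    (R : Profile n m) (i : Fin n) {x y : Fin m} (h : (R i y : ℕ) = R i x + 1) :
    F (swapTop R i x y) x + F (swapTop R i x y) y = F R x + F R y := by
  have hxy : y ≠ x := by rintro rfl; omega
  have a := h1.2 R
  have b := h1.2 (swapTop R i x y)
  rw [← add_sum_erase univ _ (mem_univ x),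
    ← add_sum_erase _ _ (mem_erase.2 ⟨hxy, mem_univ y⟩)] at a b
  have c : ∑ z ∈ (univ.erase x).erase y, F (swapTop R i x y) z =
      ∑ z ∈ (univ.erase x).erase y, F R z := by
    apply sum_congr rfl
    intro z hz
    simp at hz
    exact swF_other h1 h2 R i h hz.2 hz.1
  linarith

lemma swF_mono {n m : ℕ} {F : Profile n m → Fin m → ℝ} (h1 : IsSDS F) (h2 : Strategyproof F)
    (R : Profile n m) (i : Fin n) {x y : Fin m} (h : (R i y : ℕ) = R i x + 1) :
    F (swapTop R i x y) x ≤ F R x := by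
  have hR : ∀ j, j ≠ i → R j = swapTop R i x y j := fun j hj => (sw_ne _ _ _ _ _ hj).symm
  have a := sdp_prefix h1 h2 R (swapTop R i x y) i hR (R i x + 1)
  have b := prefix_eq h1 h2 R (swapTop R i x y) i hR (R i x) (by
    intro z
    by_cases hx : z = x
    · subst hx; rw [sw_x]; omega
    · by_cases hy : z = y
      · subst hy; rw [sw_y]; omega
      · rw [sw_z R i hx hy])
  rw [filter_succ, filter_succ] at a
  linarith

/-- gain of `x` over `y` -/
def gain {n m : ℕ} (F : Profile n m → Fin m → ℝ) (R : Profile n m) (i : Fin n) (x y : Fin m) : ℝ :=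
  F R x - F (swapTop R i x y) x

def others {n m : ℕ} (R : Profile n m) (i : Fin n) (x y : Fin m) : ℕ :=
  (univ.filter (fun j => j ≠ i ∧ R j x < R j y)).card

lemma gain_y {n m : ℕ} {F : Profile n m → Fin m → ℝ} (h1 : IsSDS F) (h2 : Strategyproof F)
    (R : Profile n m) (i : Fin n) {x y : Fin m} (h : (R i y : ℕ) = R i x + 1) :
    gain F R i x y = F (swapTop R i x y) y - F R y := by
  have := swF_sum h1 h2 R i h
  unfold gain; linarith

lemma gain_inv_x {n m : ℕ} {F : Profile n m → Fin m → ℝ} (h1 : IsSDS F) (h2 : Strategyproof F)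
    (R R' : Profile n m) (i j : Fin n) (hij : i ≠ j) (hR : ∀ l, l ≠ j → R l = R' l) {x y : Fin m}
    (hx : ∀ z, R j z < R j x ↔ R' j z < R' j x) :
    gain F R i x y = gain F R' i x y := by
  have a := sinv_one h1 h2 R R' j hR x hx
  have b := sinv_one h1 h2 (swapTop R i x y) (swapTop R' i x y) j (by
    intro l hl
    by_cases hli : l = i
    · subst hli; ext z; rw [sw_at, sw_at, hR l hl]
    · rw [sw_ne _ _ _ _ _ hli, sw_ne _ _ _ _ _ hli, hR l hl]) x (by
    rw [sw_ne _ _ _ _ _ hij.symm, sw_ne _ _ _ _ _ hij.symm]; exact hx)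
  unfold gain; rw [a, b]

lemma gain_inv_y {n m : ℕ} {F : Profile n m → Fin m → ℝ} (h1 : IsSDS F) (h2 : Strategyproof F)
    (R R' : Profile n m) (i j : Fin n) (hij : i ≠ j) (hR : ∀ l, l ≠ j → R l = R' l) {x y : Fin m}
    (h : (R i y : ℕ) = R i x + 1)
    (hx : ∀ z, R j z < R j y ↔ R' j z < R' j y) :
    gain F R i x y = gain F R' i x y := by
  have h' : (R' i y : ℕ) = R' i x + 1 := by rw [← hR i hij]; exact h
  have a := sinv_one h1 h2 R R' j hR y hx
  have b := sinv_one h1 h2 (swapTop R i x y) (swapTop R' i x y) j (by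
    intro l hl
    by_cases hli : l = i
    · subst hli; ext z; rw [sw_at, sw_at, hR l hl]
    · rw [sw_ne _ _ _ _ _ hli, sw_ne _ _ _ _ _ hli, hR l hl]) y (by
    rw [sw_ne _ _ _ _ _ hij.symm, sw_ne _ _ _ _ _ hij.symm]; exact hx)
  rw [gain_y h1 h2 R i h, gain_y h1 h2 R' i h', a, b]

lemma exists_perm {m : ℕ} (key : Fin m → ℕ) (hk : Function.Injective key) :
    ∃ e : Equiv.Perm (Fin m), ∀ y z, e y < e z ↔ key y < key z := by
  have hlt : ∀ y, (univ.filter (fun z => key z < key y)).card < m := by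
    intro y
    have : (univ.filter (fun z => key z < key y)).card < (univ : Finset (Fin m)).card := by
      apply card_lt_card
      rw [ssubset_univ_iff]
      intro h
      have : y ∈ univ.filter (fun z => key z < key y) := by rw [h]; simp
      simp at this
    simpa using this
  have hmono : ∀ y z, key y < key z →
      (univ.filter (fun w => key w < key y)).card < (univ.filter (fun w => key w < key z)).card := by
    intro y z h
    apply card_lt_card
    refine ⟨fun w hw => ?_, fun hh => ?_⟩
    · simp at hw ⊢; omega
    · have : y ∈ univ.filter (fun w => key w < key y) := hh (by simpa using h)
      simp at this
  let f : Fin m → Fin m := fun y => ⟨_, hlt y⟩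
  have key' : ∀ y z, f y < f z ↔ key y < key z := by
    intro y z
    constructor
    · intro h
      by_contra hc
      rcases Nat.lt_or_ge (key z) (key y) with h' | h'
      · have := hmono _ _ h'
        exact absurd h (not_lt.2 (le_of_lt this))
      · have : y = z := hk (by omega)
        subst this; exact absurd h (lt_irrefl _)
    · exact hmono y z
  have hinj : Function.Injective f := by
    intro y z h
    by_contra hne
    rcases Nat.lt_or_gt_of_ne (fun h => hne (hk h)) with h' | h'
    · have := (key' _ _).2 h'; rw [h] at this; exact lt_irrefl _ this
    · have := (key' _ _).2 h'; rw [h] at this; exact lt_irrefl _ this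
  exact ⟨Equiv.ofBijective f (Finite.injective_iff_bijective.1 hinj), key'⟩

/-- move `x` to the top -/
lemma exists_top {m : ℕ} (e : Equiv.Perm (Fin m)) (x y : Fin m) (h : e x < e y) :
    ∃ e' : Equiv.Perm (Fin m), (∀ z, ¬ e' z < e' x) ∧ ∀ z, e' z < e' y ↔ e z < e y := by
  obtain ⟨e', he⟩ := exists_perm (fun z => if z = x then 0 else (e z : ℕ) + 1) (by
    intro a b hab
    simp only at hab
    split_ifs at hab with h1 h2 h2
    · rw [h1, h2]
    · exact e.injective (Fin.ext (by omega)))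
  refine ⟨e', fun z => by rw [he]; simp, fun z => ?_⟩
  rw [he, Fin.lt_def]
  have : y ≠ x := by rintro rfl; exact lt_irrefl _ h
  rw [if_neg this]
  split_ifs with hz
  · subst hz; simp; exact h
  · omega

lemma gain_one {n m : ℕ} {F : Profile n m → Fin m → ℝ} (h1 : IsSDS F) (h2 : Strategyproof F)
    (R R' : Profile n m) (i j : Fin n) (hij : i ≠ j) (hR : ∀ l, l ≠ j → R l = R' l) {x y : Fin m}
    (h : (R i y : ℕ) = R i x + 1)
    (hx : R j x < R j y ↔ R' j x < R' j y) :
    gain F R i x y = gain F R' i x y := by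
  have h' : (R' i y : ℕ) = R' i x + 1 := by rw [← hR i hij]; exact h
  have hxy : x ≠ y := by rintro rfl; omega
  by_cases hc : R j x < R j y
  · obtain ⟨e, he1, he2⟩ := exists_top (R j) x y hc
    obtain ⟨e', he1', he2'⟩ := exists_top (R' j) x y (hx.1 hc)
    rw [gain_inv_y h1 h2 R (Function.update R j e) i j hij (fun l hl => by simp [hl]) h
        (fun z => by simp [he2]),
      gain_inv_y h1 h2 R' (Function.update R' j e') i j hij (fun l hl => by simp [hl]) h'
        (fun z => by simp [he2'])]
    exact gain_inv_x h1 h2 _ _ i j hij (fun l hl => by simp [hl, hR l hl])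
        (fun z => by simp only [Function.update_self]; simp only [he1, he1'])
  · have hc2 : R j y < R j x := lt_of_le_of_ne (not_lt.1 hc) (fun h => hxy ((R j).injective h).symm)
    have hc2' : R' j y < R' j x :=
      lt_of_le_of_ne (not_lt.1 (fun h => hc (hx.2 h))) (fun h => hxy ((R' j).injective h).symm)
    obtain ⟨e, he1, he2⟩ := exists_top (R j) y x hc2
    obtain ⟨e', he1', he2'⟩ := exists_top (R' j) y x hc2'
    rw [gain_inv_x h1 h2 R (Function.update R j e) i j hij (fun l hl => by simp [hl])
        (fun z => by simp [he2]),
      gain_inv_x h1 h2 R' (Function.update R' j e') i j hij (fun l hl => by simp [hl])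
        (fun z => by simp [he2'])]
    refine gain_inv_y h1 h2 _ _ i j hij (fun l hl => by simp [hl, hR l hl]) ?_
        (fun z => by simp only [Function.update_self]; simp only [he1, he1'])
    simpa [hij] using h

lemma gain_all {n m : ℕ} {F : Profile n m → Fin m → ℝ} (h1 : IsSDS F) (h2 : Strategyproof F)
    (R R' : Profile n m) (i : Fin n) (hi : R i = R' i) {x y : Fin m}
    (h : (R i y : ℕ) = R i x + 1)
    (hx : ∀ j, j ≠ i → (R j x < R j y ↔ R' j x < R' j y)) :
    gain F R i x y = gain F R' i x y := by
  have key : ∀ S : Finset (Fin n), gain F R i x y =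
      gain F (fun l => if l ∈ S then R' l else R l) i x y := by
    intro S
    induction S using Finset.induction_on with
    | empty => simp
    | insert j S hj ih =>
      rw [ih]
      by_cases hij : i = j
      · subst hij
        congr 1
        funext l
        by_cases hl : l = i
        · subst hl; simp [hi]
        · simp [hl]
      · apply gain_one h1 h2 _ _ i j hij
        · intro l hl; simp [hl]
        · have : (if i ∈ S then R' i else R i) = R i := by split_ifs <;> simp [hi]
          simp only [this]; exact h
        · simp [hj]; exact hx j (fun h => hij h.symm)
  have := key univ
  simpa using this

lemma gain_relabel {n m : ℕ} {F : Profile n m → Fin m → ℝ}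
    (h4 : Neutral F) (R : Profile n m) (i : Fin n) (x y : Fin m) (τ : Equiv.Perm (Fin m)) :
    gain F (relabel τ R) i (τ x) (τ y) = gain F R i x y := by
  unfold gain
  rw [h4, ← h4 τ (swapTop R i x y) x]
  congr 2
  funext j
  by_cases hj : j = i
  · subst hj; ext z; rw [sw_at]; simp only [relabel, Equiv.trans_apply]; rw [sw_at]; simp
  · rw [sw_ne _ _ _ _ _ hj]; simp only [relabel]; rw [sw_ne _ _ _ _ _ hj]

lemma gain_anon {n m : ℕ} {F : Profile n m → Fin m → ℝ}
    (h3 : Anonymous F) (R : Profile n m) (i : Fin n) (x y : Fin m) (π : Equiv.Perm (Fin n)) :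
    gain F (fun j => R (π j)) i x y = gain F R (π i) x y := by
  unfold gain
  rw [h3 π R, ← h3 π (swapTop R (π i) x y)]
  congr 2
  funext j
  by_cases hj : j = i
  · subst hj; ext z; rw [sw_at, sw_at]
  · rw [sw_ne _ _ _ _ _ hj, sw_ne _ _ _ _ _ (by simpa using hj)]

lemma exists_vperm {n : ℕ} (i i' : Fin n) (S S' : Finset (Fin n)) (hi : i ∉ S) (hi' : i' ∉ S')
    (h : S.card = S'.card) : ∃ π : Equiv.Perm (Fin n), π i' = i ∧ ∀ j, π j ∈ S ↔ j ∈ S' := by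
  obtain ⟨e⟩ : Nonempty ({j // j ∈ S'} ≃ {j // j ∈ S}) := ⟨Finset.equivOfCardEq h.symm⟩
  let π := e.extendSubtype
  have hπ : ∀ j, π j ∈ S ↔ j ∈ S' := by
    intro j
    by_cases hj : j ∈ S'
    · simp only [hj, iff_true]; exact e.extendSubtype_mem j hj
    · simp only [hj, iff_false]; exact e.extendSubtype_not_mem j hj
  refine ⟨π.trans (Equiv.swap (π i') i), by simp, fun j => ?_⟩
  rw [← hπ j]
  simp only [Equiv.trans_apply]
  have hs : π i' ∉ S := by rw [hπ]; exact hi'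
  by_cases h1 : π j = π i'
  · rw [h1]; simp [hi, hs]
  · by_cases h2 : π j = i
    · rw [h2]; simp [hi, hs]
    · rw [Equiv.swap_apply_of_ne_of_ne h1 h2]

lemma gain_gen {n m : ℕ} {F : Profile n m → Fin m → ℝ} (h1 : IsSDS F) (h2 : Strategyproof F)
    (h3 : Anonymous F) (h4 : Neutral F)
    (R R' : Profile n m) (i i' : Fin n) {x y x' y' : Fin m}
    (h : (R i y : ℕ) = R i x + 1) (h' : (R' i' y' : ℕ) = R' i' x' + 1)
    (hs : (R i x : ℕ) = R' i' x') (hk : others R i x y = others R' i' x' y') :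
    gain F R i x y = gain F R' i' x' y' := by
  obtain ⟨π, hπ, hπS⟩ := exists_vperm i i' _ _ (by simp) (by simp) hk
  rw [← hπ, ← gain_anon h3]
  set τ : Equiv.Perm (Fin m) := (R i).trans (R' i').symm with hτ
  have hx : τ x = x' := by
    rw [hτ, Equiv.trans_apply, Equiv.symm_apply_eq]; exact Fin.ext hs
  have hy : τ y = y' := by
    rw [hτ, Equiv.trans_apply, Equiv.symm_apply_eq]; exact Fin.ext (by omega)
  rw [← gain_relabel h4 _ _ _ _ τ, hx, hy]
  apply gain_all h1 h2
  · ext z; simp [relabel, hτ, hπ]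
  · simp only [relabel, Equiv.trans_apply, ← hx, ← hy, Equiv.symm_apply_apply, hπ]; exact h
  · intro j hj
    have := hπS j
    simp only [mem_filter, mem_univ, true_and] at this
    have hj' : π j ≠ i := by rw [← hπ]; simpa using hj
    simp only [hj, hj', ne_eq, not_false_eq_true, true_and] at this
    rw [← this]
    simp only [relabel, Equiv.trans_apply, ← hx, ← hy, Equiv.symm_apply_apply]

lemma exists_g {n m : ℕ} {F : Profile n m → Fin m → ℝ} (h1 : IsSDS F) (h2 : Strategyproof F)
    (h3 : Anonymous F) (h4 : Neutral F) : ∃ g : ℕ → ℕ → ℝ, (∀ s k, 0 ≤ g s k) ∧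
    ∀ (R : Profile n m) (i : Fin n) (x y : Fin m), (R i y : ℕ) = R i x + 1 →
      gain F R i x y = g (R i x) (others R i x y) := by
  classical
  let Q : ℕ → ℕ → Profile n m × Fin n × Fin m × Fin m → Prop := fun s k p =>
    (p.1 p.2.1 p.2.2.2 : ℕ) = p.1 p.2.1 p.2.2.1 + 1 ∧ (p.1 p.2.1 p.2.2.1 : ℕ) = s ∧
      others p.1 p.2.1 p.2.2.1 p.2.2.2 = k
  refine ⟨fun s k => if h : ∃ p, Q s k p then
    gain F h.choose.1 h.choose.2.1 h.choose.2.2.1 h.choose.2.2.2 else 0, ?_, ?_⟩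
  · intro s k
    simp only
    split_ifs with h
    · have := swF_mono h1 h2 h.choose.1 h.choose.2.1 h.choose_spec.1
      unfold gain; linarith
    · exact le_rfl
  · intro R i x y h
    have hQ : ∃ p, Q (R i x) (others R i x y) p := ⟨(R, i, x, y), h, rfl, rfl⟩
    simp only [dif_pos hQ]
    obtain ⟨a, b, c⟩ := hQ.choose_spec
    exact gain_gen h1 h2 h3 h4 _ _ _ _ h a b.symm c.symm

lemma supp_eq {n m : ℕ} (R : Profile n m) (i : Fin n) (x y : Fin m) :
    suppSize R x y = others R i x y + if R i x < R i y then 1 else 0 := by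
  unfold suppSize others
  have : univ.filter (fun j => j ≠ i ∧ R j x < R j y) =
      (univ.filter (fun j => R j x < R j y)).erase i := by
    ext j; simp
  rw [this]
  split_ifs with h
  · rw [card_erase_add_one]; simpa using h
  · have hm : i ∉ univ.filter (fun j => R j x < R j y) := by simpa using h
    rw [erase_eq_of_notMem hm]; rfl

def others2 {n m : ℕ} (R : Profile n m) (i j : Fin n) (x y : Fin m) : ℕ :=
  (univ.filter (fun l => l ≠ i ∧ l ≠ j ∧ R l x < R l y)).card

lemma others_eq {n m : ℕ} (R : Profile n m) (i j : Fin n) (hij : j ≠ i) (x y : Fin m) :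
    others R i x y = others2 R i j x y + if R j x < R j y then 1 else 0 := by
  unfold others2 others
  have : univ.filter (fun l => l ≠ i ∧ l ≠ j ∧ R l x < R l y) =
      (univ.filter (fun j => j ≠ i ∧ R j x < R j y)).erase j := by
    ext l; simp; tauto
  rw [this]
  split_ifs with h
  · rw [card_erase_add_one]; simpa [hij] using h
  · rw [erase_eq_of_notMem (fun hm => h (mem_filter.1 hm).2.2)]; rfl

lemma others2_comm {n m : ℕ} (R : Profile n m) (i j : Fin n) (x y : Fin m) :
    others2 R i j x y = others2 R j i x y := by
  unfold others2; congr 1; ext l; simp; tauto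

lemma others2_congr {n m : ℕ} (R R' : Profile n m) (i j : Fin n) (x y : Fin m)
    (h : ∀ l, l ≠ i → l ≠ j → R l = R' l) :
    others2 R i j x y = others2 R' i j x y := by
  unfold others2; congr 1; ext l
  simp only [mem_filter, mem_univ, true_and]
  constructor
  · rintro ⟨a, b, c⟩; rw [h l a b] at c; exact ⟨a, b, c⟩
  · rintro ⟨a, b, c⟩; rw [← h l a b] at c; exact ⟨a, b, c⟩

lemma others_sw {n m : ℕ} (R : Profile n m) (i : Fin n) (x y a b : Fin m) :
    others (swapTop R i x y) i a b = others R i a b := by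
  unfold others; congr 1; ext l
  simp only [mem_filter, mem_univ, true_and]
  constructor
  · rintro ⟨h, c⟩; rw [sw_ne _ _ _ _ _ h] at c; exact ⟨h, c⟩
  · rintro ⟨h, c⟩; refine ⟨h, ?_⟩; rw [sw_ne _ _ _ _ _ h]; exact c

lemma supp_add {n m : ℕ} (R : Profile n m) {x y : Fin m} (h : x ≠ y) :
    suppSize R x y + suppSize R y x = n := by
  unfold suppSize
  have : univ.filter (fun j => R j y < R j x) = univ.filter (fun j => ¬ R j x < R j y) := by
    ext j
    simp only [mem_filter, mem_univ, true_and, not_lt]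
    exact ⟨le_of_lt, fun h' => lt_of_le_of_ne h' (fun h'' => h ((R j).injective h'').symm)⟩
  rw [this, card_filter_add_card_filter_not]; simp

lemma others_add {n m : ℕ} (R : Profile n m) (i : Fin n) {x y : Fin m} (h : x ≠ y) :
    others R i x y + others R i y x + 1 = n := by
  have := supp_add R h
  rw [supp_eq R i x y, supp_eq R i y x] at this
  have h' := rank_ne (R i) h
  by_cases hc : R i x < R i y
  · rw [if_pos hc, if_neg (lt_asymm hc)] at this; omega
  · have hc2 : R i y < R i x := lt_of_le_of_ne (not_lt.1 hc) (fun h'' => h ((R i).injective h'').symm)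
    rw [if_neg hc, if_pos hc2] at this; omega

lemma card_lt_fin {n k : ℕ} (h : k ≤ n) :
    (univ.filter (fun l : Fin n => (l : ℕ) < k)).card = k := by
  rw [Fin.card_filter_val_lt]; omega

lemma g_sym {n m : ℕ} {F : Profile n m → Fin m → ℝ} (h1 : IsSDS F) (h2 : Strategyproof F)
    {g : ℕ → ℕ → ℝ} (hg : ∀ (R : Profile n m) (i : Fin n) (x y : Fin m),
      (R i y : ℕ) = R i x + 1 → gain F R i x y = g (R i x) (others R i x y))
    (s k : ℕ) (hs : s + 1 < m) (hk : k < n) : g s k = g s (n - 1 - k) := by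
  let x : Fin m := ⟨s, by omega⟩
  let y : Fin m := ⟨s + 1, hs⟩
  have hxy : x ≠ y := by simp [x, y]
  have hlt : x < y := by simp [x, y, Fin.lt_def]
  let i : Fin n := ⟨n - 1, by omega⟩
  let R : Profile n m := fun l => if l = i then 1 else if (l : ℕ) < k then 1 else Equiv.swap x y
  have hi : R i = 1 := by simp [R]
  have hadj : (R i y : ℕ) = R i x + 1 := by rw [hi]; simp [x, y]
  have hrk : (R i x : ℕ) = s := by rw [hi]; simp [x]
  have ho : others R i x y = k := by
    unfold others
    rw [← card_lt_fin (n := n) (k := k) (by omega)]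
    congr 1
    ext l
    simp only [mem_filter, mem_univ, true_and, R]
    constructor
    · rintro ⟨h, h'⟩
      by_contra hc
      rw [if_neg h, if_neg hc] at h'
      simp at h'
      exact lt_asymm h' hlt
    · intro h
      have : l ≠ i := by rintro rfl; simp [i] at h; omega
      refine ⟨this, ?_⟩
      rw [if_neg this, if_pos h]; simpa using hlt
  have e1 := hg R i x y hadj
  have e2 := hg (swapTop R i x y) i y x (by rw [sw_x, sw_y]; exact hadj)
  rw [sw_y, others_sw] at e2
  have e3 := gain_y h1 h2 R i hadj
  have e4 : gain F (swapTop R i x y) i y x = gain F R i x y := by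
    rw [e3]; unfold gain; rw [sw_sw]
  have e5 := others_add R i hxy
  rw [ho, hrk] at e1
  rw [hrk, show others R i y x = n - 1 - k by omega] at e2
  linarith

lemma sw_comm {n m : ℕ} (R : Profile n m) (i j : Fin n) (hij : i ≠ j) (x y : Fin m) :
    swapTop (swapTop R i x y) j x y = swapTop (swapTop R j x y) i x y := by
  unfold swapTop
  rw [Function.update_of_ne hij.symm, Function.update_of_ne hij, Function.update_comm hij]

lemma g_add_step {n m : ℕ} {F : Profile n m → Fin m → ℝ}
    {g : ℕ → ℕ → ℝ} (hg : ∀ (R : Profile n m) (i : Fin n) (x y : Fin m),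
      (R i y : ℕ) = R i x + 1 → gain F R i x y = g (R i x) (others R i x y))
    (s k : ℕ) (hs : s + 1 < m) (hk : k + 1 < n) : g s (k + 1) + g 0 k = g s k + g 0 (k + 1) := by
  let x : Fin m := ⟨s, by omega⟩
  let y : Fin m := ⟨s + 1, hs⟩
  have hxy : x ≠ y := by simp [x, y]
  have hlt : x < y := by simp [x, y, Fin.lt_def]
  let i : Fin n := ⟨n - 1, by omega⟩
  let j : Fin n := ⟨n - 2, by omega⟩
  have hij : i ≠ j := by simp [i, j]; omega
  obtain ⟨e, hex, hey⟩ : ∃ e : Equiv.Perm (Fin m), (e x : ℕ) = 0 ∧ (e y : ℕ) = 1 := by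
    let z : Fin m := ⟨0, by omega⟩
    let o : Fin m := ⟨1, by omega⟩
    have hzo : z ≠ o := by simp [z, o]
    refine ⟨(Equiv.swap x z).trans (Equiv.swap (Equiv.swap x z y) o), ?_, ?_⟩
    · simp only [Equiv.trans_apply, Equiv.swap_apply_left]
      rw [Equiv.swap_apply_of_ne_of_ne _ hzo]
      intro h
      rw [eq_comm, Equiv.swap_apply_eq_iff] at h
      simp at h; exact hxy h.symm
    · simp [o]
  let R : Profile n m := fun l => if l = i then 1 else if l = j then e else
    if (l : ℕ) < k then 1 else Equiv.swap x y
  have hi : R i = 1 := by simp [R]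
  have hj : R j = e := by simp [R, hij.symm]
  have hadj : (R i y : ℕ) = R i x + 1 := by rw [hi]; simp [x, y]
  have hadj2 : (R j y : ℕ) = R j x + 1 := by rw [hj]; omega
  have hrk : (R i x : ℕ) = s := by rw [hi]; simp [x]
  have hrk2 : (R j x : ℕ) = 0 := by rw [hj]; exact hex
  have hli : R i x < R i y := by rw [Fin.lt_def]; omega
  have hlj : R j x < R j y := by rw [Fin.lt_def]; omega
  have ho : others2 R i j x y = k := by
    unfold others2
    rw [← card_lt_fin (n := n) (k := k) (by omega)]
    congr 1
    ext l
    simp only [mem_filter, mem_univ, true_and, R]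
    constructor
    · rintro ⟨h, h2, h'⟩
      by_contra hc
      rw [if_neg h, if_neg h2, if_neg hc] at h'
      simp at h'
      exact lt_asymm h' hlt
    · intro h
      have a : l ≠ i := by rintro rfl; simp [i] at h; omega
      have b : l ≠ j := by rintro rfl; simp [j] at h; omega
      refine ⟨a, b, ?_⟩
      rw [if_neg a, if_neg b, if_pos h]; simpa using hlt
  have e1 := hg R i x y hadj
  rw [hrk, others_eq R i j hij.symm, if_pos hlj, ho] at e1
  have e2 := hg R j x y hadj2
  rw [hrk2, others_eq R j i hij, if_pos hli, others2_comm, ho] at e2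
  have e3 := hg (swapTop R i x y) j x y (by rw [sw_ne _ _ _ _ _ hij.symm]; exact hadj2)
  rw [sw_ne _ _ _ _ _ hij.symm, others_eq _ j i hij, sw_x, sw_y, if_neg (lt_asymm hli), hrk2,
    others2_congr _ R j i x y (fun l _ h => sw_ne _ _ _ _ _ h), others2_comm, ho] at e3
  have e4 := hg (swapTop R j x y) i x y (by rw [sw_ne _ _ _ _ _ hij]; exact hadj)
  rw [sw_ne _ _ _ _ _ hij, others_eq _ i j hij.symm, sw_x, sw_y, if_neg (lt_asymm hlj), hrk,
    others2_congr _ R i j x y (fun l _ h => sw_ne _ _ _ _ _ h), ho] at e4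
  unfold gain at e1 e2 e3 e4
  rw [sw_comm R i j hij] at e3
  rw [add_zero] at e3 e4
  linarith

lemma g_add {n m : ℕ} {F : Profile n m → Fin m → ℝ}
    {g : ℕ → ℕ → ℝ} (hg : ∀ (R : Profile n m) (i : Fin n) (x y : Fin m),
      (R i y : ℕ) = R i x + 1 → gain F R i x y = g (R i x) (others R i x y))
    (s k : ℕ) (hs : s + 1 < m) (hk : k < n) : g s k = g s 0 + g 0 k - g 0 0 := by
  induction k with
  | zero => ring
  | succ k ih =>
    have := g_add_step hg s k hs hk
    have := ih (by omega)
    linarith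

/-- additive decomposition of gains -/
lemma exists_ab {n m : ℕ} (hn : 0 < n) {F : Profile n m → Fin m → ℝ} (h1 : IsSDS F)
    (h2 : Strategyproof F) (h3 : Anonymous F) (h4 : Neutral F) :
    ∃ a b : ℕ → ℝ, (∀ s, 0 ≤ a s) ∧ (∀ k, k < n → 0 ≤ b k) ∧
    (1 < m → ∀ k, k < n → b k = b (n - 1 - k)) ∧
    ∀ (R : Profile n m) (i : Fin n) (x y : Fin m), (R i y : ℕ) = R i x + 1 →
      gain F R i x y = a (R i x) + b (others R i x y) := by
  obtain ⟨g, hg0, hg⟩ := exists_g h1 h2 h3 h4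
  obtain ⟨k0, hk0, hmin⟩ := Finset.exists_min_image (Finset.range n) (g 0) ⟨0, by simpa using hn⟩
  simp only [mem_range] at hk0 hmin
  refine ⟨fun s => g s k0, fun k => g 0 k - g 0 k0, fun s => hg0 _ _, fun k hk => ?_,
    fun hm k hk => ?_, fun R i x y h => ?_⟩
  · have := hmin k hk; linarith
  · have := g_sym h1 h2 hg 0 k (by omega) hk
    simp only; rw [this]
  · rw [hg R i x y h]
    have hs : (R i x : ℕ) + 1 < m := by have := (R i y).2; omega
    have hk : others R i x y < n := by
      have hxy : x ≠ y := by rintro rfl; omega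
      have := others_add R i hxy; omega
    have u := g_add hg _ _ hs hk
    have v := g_add hg _ _ hs hk0
    simp only
    linarith

def Hfun {n m : ℕ} (A B : ℕ → ℝ) (R : Profile n m) (x : Fin m) : ℝ :=
  ∑ i, A (R i x) + ∑ y, B (suppSize R x y)

lemma supp_sw {n m : ℕ} (R : Profile n m) (i : Fin n) {x y : Fin m}
    (h : (R i y : ℕ) = R i x + 1) (a b : Fin m) (h1 : ¬ (a = x ∧ b = y)) (h2 : ¬ (a = y ∧ b = x)) :
    suppSize (swapTop R i x y) a b = suppSize R a b := by
  unfold suppSize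
  congr 1; ext j
  simp only [mem_filter, mem_univ, true_and]
  exact sw_lt R i h a b h1 h2 j

lemma Hsum_sw {n m : ℕ} (A : ℕ → ℝ) (R : Profile n m) (i : Fin n) (x y z : Fin m) :
    ∑ j, A (swapTop R i x y j z) - ∑ j, A (R j z) = A (swapTop R i x y i z) - A (R i z) := by
  rw [← add_sum_erase univ _ (mem_univ i), ← add_sum_erase univ (fun j => A (R j z)) (mem_univ i)]
  have : ∑ j ∈ univ.erase i, A (swapTop R i x y j z) = ∑ j ∈ univ.erase i, A (R j z) := by
    apply sum_congr rfl
    intro j hj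
    rw [sw_ne _ _ _ _ _ (ne_of_mem_erase hj)]
  rw [this]; ring

lemma D_sw {n m : ℕ} {F : Profile n m → Fin m → ℝ} (h1 : IsSDS F)
    (h2 : Strategyproof F) (a b A B : ℕ → ℝ)
    (hsym : 1 < m → ∀ k, k < n → b k = b (n - 1 - k))
    (hg : ∀ (R : Profile n m) (i : Fin n) (x y : Fin m), (R i y : ℕ) = R i x + 1 →
      gain F R i x y = a (R i x) + b (others R i x y))
    (hA : ∀ s, s + 1 < m → A s = A (s + 1) + a s)
    (hB : ∀ k, B (k + 1) = B k + b k)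
    (R : Profile n m) (i : Fin n) (x y : Fin m) (h : (R i y : ℕ) = R i x + 1) (z : Fin m) :
    F (swapTop R i x y) z - Hfun A B (swapTop R i x y) z = F R z - Hfun A B R z := by
  have hxy : x ≠ y := by rintro rfl; omega
  have hs : (R i x : ℕ) + 1 < m := by have := (R i y).2; omega
  have hG := hg R i x y h
  have hAd := hA _ hs
  have hSA := Hsum_sw A R i x y z
  have hlt : R i x < R i y := by rw [Fin.lt_def]; omega
  have hadd := others_add R i hxy
  unfold Hfun
  by_cases hzx : z = x
  · subst hzx
    rw [sw_x, h] at hSA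
    have e : ∑ w, B (suppSize (swapTop R i z y) z w) + b (others R i z y) =
        ∑ w, B (suppSize R z w) := by
      rw [← add_sum_erase univ _ (mem_univ y),
        ← add_sum_erase univ (fun w => B (suppSize R z w)) (mem_univ y)]
      rw [sum_congr rfl (fun w hw => by
        rw [supp_sw R i h z w (fun hh => ne_of_mem_erase hw hh.2) (fun hh => hxy hh.1)])]
      rw [supp_eq R i z y, supp_eq _ i z y, others_sw, sw_x, sw_y, if_pos hlt,
        if_neg (lt_asymm hlt), hB, add_zero]
      ring
    unfold gain at hG
    linarith
  · by_cases hzy : z = y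
    · subst hzy
      rw [sw_y, h] at hSA
      have e : ∑ w, B (suppSize (swapTop R i x z) z w) =
          ∑ w, B (suppSize R z w) + b (others R i z x) := by
        rw [← add_sum_erase univ _ (mem_univ x),
          ← add_sum_erase univ (fun w => B (suppSize R z w)) (mem_univ x)]
        rw [sum_congr rfl (fun w hw => by
          rw [supp_sw R i h z w (fun hh => hxy hh.1.symm) (fun hh => ne_of_mem_erase hw hh.2)])]
        rw [supp_eq R i z x, supp_eq _ i z x, others_sw, sw_x, sw_y, if_pos hlt,
          if_neg (lt_asymm hlt), hB, add_zero]
        ring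
      have e2 := hsym (by omega) (others R i x z) (by omega)
      rw [show n - 1 - others R i x z = others R i z x by omega] at e2
      rw [gain_y h1 h2 R i h] at hG
      linarith
    · rw [sw_z R i hzx hzy] at hSA
      have e : ∑ w, B (suppSize (swapTop R i x y) z w) = ∑ w, B (suppSize R z w) :=
        sum_congr rfl (fun w _ => by
          rw [supp_sw R i h z w (fun hh => hzx hh.1) (fun hh => hzy hh.1)])
      rw [swF_other h1 h2 R i h hzx hzy]
      linarith

lemma const_of_sw {n M : ℕ} (D : Profile n (M + 1) → ℝ)
    (h : ∀ (R : Profile n (M + 1)) (i : Fin n) (x y : Fin (M + 1)), (R i y : ℕ) = R i x + 1 →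
      D (swapTop R i x y) = D R) (R R' : Profile n (M + 1)) : D R = D R' := by
  have step : ∀ (i : Fin n) (σ : Equiv.Perm (Fin (M + 1))) (R : Profile n (M + 1)),
      D (Function.update R i (σ * R i)) = D R := by
    intro i σ
    have hσ : σ ∈ Submonoid.closure
        (Set.range fun i : Fin M ↦ Equiv.swap i.castSucc i.succ) := by
      rw [Equiv.Perm.mclosure_swap_castSucc_succ]; trivial
    induction hσ using Submonoid.closure_induction with
    | mem σ hm =>
      obtain ⟨s, rfl⟩ := hm
      intro R
      rw [← h R i ((R i).symm s.castSucc) ((R i).symm s.succ) (by simp)]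
      congr 1
      unfold swapTop
      simp [Equiv.Perm.mul_def]
    | one => intro R; simp
    | mul σ τ _ _ hσ hτ =>
      intro R
      rw [← hτ R, ← hσ (Function.update R i (τ * R i))]
      simp [mul_assoc]
  have key : ∀ S : Finset (Fin n), D R = D (fun l => if l ∈ S then R' l else R l) := by
    intro S
    induction S using Finset.induction_on with
    | empty => simp
    | insert j S hj ih =>
      rw [ih, ← step j (R' j * (R j)⁻¹)]
      congr 1
      funext l
      by_cases hl : l = j
      · subst hl; simp [hj]
      · simp [hl]
  have := key univ
  simpa using this

lemma rep {n M : ℕ} (hn : 0 < n) {F : Profile n (M + 1) → Fin (M + 1) → ℝ} (h1 : IsSDS F)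
    (h2 : Strategyproof F) (h3 : Anonymous F) (h4 : Neutral F) :
    ∃ (C : ℝ) (A B : ℕ → ℝ), 0 ≤ C ∧ (∀ r, 0 ≤ A r) ∧ B 0 = 0 ∧ (∀ k, k ≤ n → B k ≤ B n) ∧
      (0 < M → ∀ k, k ≤ n → B k + B (n - k) = B n) ∧
      ∀ R x, F R x = C + Hfun A B R x := by
  obtain ⟨a, b, ha, hb, hsym, hg⟩ := exists_ab hn h1 h2 h3 h4
  let A : ℕ → ℝ := fun r => ∑ s ∈ Finset.Ico r M, a s
  let B : ℕ → ℝ := fun k => ∑ l ∈ Finset.range k, b l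
  have hA : ∀ s, s + 1 < M + 1 → A s = A (s + 1) + a s := by
    intro s hs
    simp only [A]
    rw [Finset.sum_eq_sum_Ico_succ_bot (by omega)]; ring
  have hB : ∀ k, B (k + 1) = B k + b k := fun k => Finset.sum_range_succ _ _
  have hD := D_sw h1 h2 a b A B (fun h => hsym h) hg hA hB
  have hB0 : B 0 = 0 := by simp [B]
  have hc : ∀ x R R', F R x - Hfun A B R x = F R' x - Hfun A B R' x := fun x R R' =>
    const_of_sw (fun R => F R x - Hfun A B R x) (fun R i y z h => hD R i y z h x) R R'
  let R0 : Fin (M + 1) → Profile n (M + 1) := fun x _ => Equiv.swap x (Fin.last M)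
  have hH0 : ∀ x, Hfun A B (R0 x) x = 0 := by
    intro x
    have e1 : ∀ y, suppSize (R0 x) x y = 0 := by
      intro y
      unfold suppSize
      rw [card_eq_zero, filter_eq_empty_iff]
      intro i _
      simp only [R0, Equiv.swap_apply_left, not_lt]
      exact Fin.le_last _
    simp [Hfun, e1, hB0, A, R0]
  have hF0 : ∀ x, F (R0 x) x = F (R0 (Fin.last M)) (Fin.last M) := by
    intro x
    have := h4 (Equiv.swap x (Fin.last M)) (R0 x) x
    rw [Equiv.swap_apply_left] at this
    rw [← this]
    congr 1
    funext i; ext z; simp [relabel, R0]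
  refine ⟨F (R0 (Fin.last M)) (Fin.last M), A, B, h1.1 _ _, fun r => sum_nonneg (fun s _ => ha s),
    hB0, ?_, ?_, ?_⟩
  · intro k hk
    apply Finset.sum_le_sum_of_subset_of_nonneg
    · intro l hl; simp at hl ⊢; omega
    · intro l hl _; exact hb l (by simpa using hl)
  · intro hM k
    induction k with
    | zero => intro _; simp [hB0]
    | succ k ih =>
      intro hk
      have := ih (by omega)
      have e := hB (n - (k + 1))
      rw [show n - (k + 1) + 1 = n - k by omega] at e
      have e2 := hsym (by omega) k (by omega)
      rw [show n - 1 - k = n - (k + 1) by omega] at e2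
      rw [hB]; linarith
  · intro R x
    have := hc x R (R0 x)
    rw [hH0, hF0] at this
    linarith

def symF {n m : ℕ} (F : Profile n m → Fin m → ℝ) : Profile n m → Fin m → ℝ := fun R x =>
  (∑ p : Equiv.Perm (Fin n) × Equiv.Perm (Fin m), F (relabel p.2 (fun i => R (p.1 i))) (p.2 x)) /
    (Fintype.card (Equiv.Perm (Fin n) × Equiv.Perm (Fin m)) : ℝ)

lemma card_pos_real (n m : ℕ) :
    (0 : ℝ) < (Fintype.card (Equiv.Perm (Fin n) × Equiv.Perm (Fin m)) : ℝ) := by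
  exact_mod_cast Fintype.card_pos

lemma symF_sds {n m : ℕ} {F : Profile n m → Fin m → ℝ} (h1 : IsSDS F) : IsSDS (symF F) := by
  constructor
  · intro R x
    exact div_nonneg (sum_nonneg (fun p _ => h1.1 _ _)) (card_pos_real n m).le
  · intro R
    unfold symF
    rw [← sum_div, sum_comm]
    have : ∀ p : Equiv.Perm (Fin n) × Equiv.Perm (Fin m),
        ∑ x, F (relabel p.2 (fun i => R (p.1 i))) (p.2 x) = 1 := by
      intro p
      rw [Equiv.sum_comp p.2 (fun x => F (relabel p.2 (fun i => R (p.1 i))) x)]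
      exact h1.2 _
    rw [sum_congr rfl (fun p _ => this p)]
    simp only [sum_const, card_univ, nsmul_eq_mul, mul_one]
    exact div_self (card_pos_real n m).ne'

lemma symF_sp {n m : ℕ} {F : Profile n m → Fin m → ℝ} (h2 : Strategyproof F) :
    Strategyproof (symF F) := by
  intro R R' i hR x
  unfold symF
  rw [← sum_div, ← sum_div]
  apply div_le_div_of_nonneg_right _ (card_pos_real n m).le
  rw [sum_comm, sum_comm (s := univ.filter _)]
  apply sum_le_sum
  rintro ⟨π, τ⟩ _
  have := h2 (relabel τ (fun i => R (π i))) (relabel τ (fun i => R' (π i))) (π.symm i) (by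
    intro j hj
    have : π j ≠ i := by rintro rfl; simp at hj
    simp [relabel, hR _ this]) (τ x)
  simp only [relabel, Equiv.trans_apply, Equiv.apply_symm_apply, Equiv.symm_apply_apply] at this
  have e : ∀ f : Fin m → ℝ, ∑ y ∈ univ.filter (fun y => R i y < R i x), f (τ y) =
      ∑ y ∈ univ.filter (fun y => R i (τ.symm y) < R i x), f y := by
    intro f
    apply sum_equiv τ <;> simp
  simp only [e]
  exact this

lemma symF_anon {n m : ℕ} (F : Profile n m → Fin m → ℝ) : Anonymous (symF F) := by
  intro π R
  funext x
  unfold symF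
  congr 1
  exact Fintype.sum_equiv ((Equiv.mulLeft π).prodCongr (Equiv.refl _)) _ _ (fun p => by simp)

lemma symF_neut {n m : ℕ} (F : Profile n m → Fin m → ℝ) : Neutral (symF F) := by
  intro τ R x
  unfold symF
  congr 1
  refine Fintype.sum_equiv ((Equiv.refl _).prodCongr (Equiv.mulRight τ)) _ _ (fun p => ?_)
  simp only [Equiv.prodCongr_apply, Prod.map_fst, Prod.map_snd, Equiv.coe_refl, id,
    Equiv.coe_mulRight, Equiv.Perm.mul_apply]
  congr 1

lemma symF_cc {n m : ℕ} {F : Profile n m → Fin m → ℝ} {α : ℝ} (h : CondorcetConsistent F α) :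
    CondorcetConsistent (symF F) α := by
  intro R x hx
  unfold symF
  rw [le_div_iff₀ (card_pos_real n m)]
  have : ∀ p ∈ (univ : Finset (Equiv.Perm (Fin n) × Equiv.Perm (Fin m))),
      α ≤ F (relabel p.2 (fun i => R (p.1 i))) (p.2 x) := by
    rintro ⟨π, τ⟩ _
    apply h
    have e : ∀ a b, suppSize (relabel τ (fun i => R (π i))) a b =
        suppSize R (τ.symm a) (τ.symm b) := by
      intro a b
      unfold suppSize
      apply card_equiv π
      intro i; rw [mem_filter, mem_filter]; simp [relabel]
    intro y hy
    rw [e, e]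
    simp only [Equiv.symm_apply_apply]
    apply hx
    rw [ne_eq, Equiv.symm_apply_eq]; exact hy
  have := card_nsmul_le_sum _ _ _ this
  rw [nsmul_eq_mul, card_univ] at this
  linarith

lemma exists_prof {n M : ℕ} (hn : 3 ≤ n) (t : ℕ) (ht : t < M + 1) :
    ∃ P : Profile n (M + 1), CondorcetWinner P 0 ∧
      ∀ i : Fin n, (P i 0 : ℕ) = if (i : ℕ) % 2 = 0 then t / 2 else (M - t) / 2 := by
  let l0 := t / 2
  let l1 := (M - t) / 2
  have hl : 2 * l0 + 2 * l1 ≤ M := by simp only [l0, l1]; omega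
  let o : ℕ → ℕ := fun c => if c = 0 then 0 else if c = 1 then l0 else if c = 2 then l0 + l1
    else l0 + l1 + l0
  let l : ℕ → ℕ := fun c => if c % 2 = 0 then l0 else l1
  have hol : ∀ c, c < 4 → 1 + o c + l c ≤ M + 1 := by
    intro c hc; simp only [o, l]; split_ifs <;> omega
  have hdis : ∀ c d, c < 4 → d < 4 → ∀ y, 1 + o c ≤ y → y < 1 + o c + l c → 1 + o d ≤ y →
      y < 1 + o d + l d → c = d := by
    intro c d hc hd y
    simp only [o, l]; split_ifs <;> omega
  have hperm : ∀ c : ℕ, ∃ e : Equiv.Perm (Fin (M + 1)),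
      ∀ z, e z < e 0 ↔ (1 + o c ≤ (z : ℕ) ∧ (z : ℕ) < 1 + o c + l c) := by
    intro c
    obtain ⟨e, he⟩ := exists_perm (m := M + 1) (fun z =>
      if 1 + o c ≤ (z : ℕ) ∧ (z : ℕ) < 1 + o c + l c then (z : ℕ) else M + 1 + z) (by
        intro a b hab
        have := a.2
        have := b.2
        apply Fin.ext
        simp only at hab
        split_ifs at hab <;> omega)
    refine ⟨e, fun z => ?_⟩
    rw [he]
    have := z.2
    have h0 : ¬ (1 + o c ≤ ((0 : Fin (M + 1)) : ℕ) ∧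
        ((0 : Fin (M + 1)) : ℕ) < 1 + o c + l c) := by rw [Fin.val_zero]; omega
    rw [if_neg h0, Fin.val_zero]
    by_cases h : 1 + o c ≤ (z : ℕ) ∧ (z : ℕ) < 1 + o c + l c
    · rw [if_pos h]; exact ⟨fun _ => h, fun _ => by omega⟩
    · rw [if_neg h]; exact ⟨fun _ => by omega, fun h' => absurd h' h⟩
  choose e he using hperm
  refine ⟨fun i => e ((i : ℕ) % 4), ?_, ?_⟩
  · intro y hy
    have hadd := supp_add (fun i : Fin n => e ((i : ℕ) % 4)) hy
    have hle : suppSize (fun i : Fin n => e ((i : ℕ) % 4)) y 0 ≤ (n + 3) / 4 := by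
      unfold suppSize
      rw [← card_range ((n + 3) / 4)]
      apply card_le_card_of_injOn (fun i : Fin n => (i : ℕ) / 4)
      · intro i _
        have := i.2
        simp; omega
      · intro i hi j hj hij
        simp [he] at hi hj
        simp only at hij
        have := hdis _ _ (Nat.mod_lt _ (by norm_num)) (Nat.mod_lt _ (by norm_num)) (y : ℕ)
          hi.1 hi.2 hj.1 hj.2
        apply Fin.ext; omega
    omega
  · intro i
    simp only
    rw [rank_card]
    have hc := hol _ (Nat.mod_lt (i : ℕ) (by norm_num : 4 > 0))
    have : (univ.filter (fun z => e ((i : ℕ) % 4) z < e ((i : ℕ) % 4) 0)).card =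
        (Finset.Ico (1 + o ((i : ℕ) % 4)) (1 + o ((i : ℕ) % 4) + l ((i : ℕ) % 4))).card := by
      apply card_bij (fun (z : Fin (M + 1)) _ => (z : ℕ))
      · intro a ha; simpa [he] using ha
      · intro a _ b _ h; exact Fin.ext h
      · intro b hb
        simp only [mem_Ico] at hb
        exact ⟨⟨b, by omega⟩, by simpa [he] using hb, rfl⟩
    rw [this, Nat.card_Ico, Nat.add_sub_cancel_left]
    simp only [l, l0, l1]
    have : (i : ℕ) % 4 % 2 = (i : ℕ) % 2 := by omega
    rw [this]

lemma half_sum (A : ℕ → ℝ) (hA : ∀ r, 0 ≤ A r) (M : ℕ) :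
    ∑ t ∈ Finset.range (M + 1), A (t / 2) ≤ 2 * ∑ r ∈ Finset.range (M + 1), A r := by
  have h : ∀ N, ∑ t ∈ Finset.range (2 * N), A (t / 2) = 2 * ∑ r ∈ Finset.range N, A r := by
    intro N
    induction N with
    | zero => simp
    | succ N ih =>
      rw [show 2 * (N + 1) = 2 * N + 1 + 1 by ring, sum_range_succ, sum_range_succ, ih,
        sum_range_succ]
      rw [show 2 * N / 2 = N by omega, show (2 * N + 1) / 2 = N by omega]
      ring
  rw [← h]
  apply sum_le_sum_of_subset_of_nonneg
  · intro t ht; simp at ht ⊢; omega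
  · intro t _ _; exact hA _

lemma main_bound {n M : ℕ} (hn : 3 ≤ n) {F : Profile n (M + 1) → Fin (M + 1) → ℝ} (h1 : IsSDS F)
    (h2 : Strategyproof F) (h3 : Anonymous F) (h4 : Neutral F) {α : ℝ}
    (h5 : CondorcetConsistent F α) : ((M : ℝ) + 1) * α ≤ 2 := by
  obtain ⟨C, A, B, hC, hA, hB0, hBn, hsym, hF⟩ := rep (by omega) h1 h2 h3 h4
  set S := ∑ r ∈ Finset.range (M + 1), A r with hS
  choose P hP hPr using fun t : Fin (M + 1) => exists_prof hn t.1 t.2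
  have hself : ∀ (R : Profile n (M + 1)) x, suppSize R x x = 0 := by
    intro R x; simp [suppSize]
  have hBnn : 0 ≤ B n := by rw [← hB0]; exact hBn 0 (by omega)
  -- total probability
  have htot : ((M : ℝ) + 1) * C + n * S + (M + 1) * M / 2 * B n = 1 := by
    let R : Profile n (M + 1) := fun _ => 1
    have e0 := h1.2 R
    have e1 : ∑ x, ∑ i, A (R i x) = n * S := by
      rw [sum_comm]
      have : ∀ i, ∑ x, A (R i x) = S := by
        intro i
        rw [Equiv.sum_comp (R i) (fun x => A x), hS, Fin.sum_univ_eq_sum_range (fun x => A x)]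
      simp [this]
    have e2 : ∑ x, ∑ y, B (suppSize R x y) + ∑ x, ∑ y, B (suppSize R x y) =
        (M + 1) * M * B n := by
      nth_rewrite 2 [sum_comm]
      rw [← sum_add_distrib]
      have : ∀ x, ∑ y, B (suppSize R x y) + ∑ y, B (suppSize R y x) = M * B n := by
        intro x
        rw [← sum_add_distrib, ← add_sum_erase univ _ (mem_univ x), hself, hB0]
        have : ∀ y ∈ univ.erase x, B (suppSize R x y) + B (suppSize R y x) = B n := by
          intro y hy
          have hne : x ≠ y := (ne_of_mem_erase hy).symm
          have hM : 0 < M := by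
            by_contra hM
            have := x.2
            have := y.2
            exact hne (Fin.ext (by omega))
          have e := supp_add R hne
          have := hsym hM (suppSize R x y) (by omega)
          rwa [show n - suppSize R x y = suppSize R y x by omega] at this
        rw [sum_congr rfl this]
        simp
      rw [sum_congr rfl (fun x _ => this x)]
      simp; ring
    simp only [hF, Hfun, sum_add_distrib, e1] at e0
    simp at e0
    linarith
  have hup : ∀ t, α ≤ C + ∑ i, A (P t i 0) + M * B n := by
    intro t
    have a := h5 _ _ (hP t)
    rw [hF, Hfun] at a
    have : ∑ y, B (suppSize (P t) 0 y) ≤ M * B n := by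
      rw [← add_sum_erase univ _ (mem_univ 0), hself, hB0, zero_add]
      have := sum_le_card_nsmul (univ.erase (0 : Fin (M + 1)))
        (fun y => B (suppSize (P t) 0 y)) (B n) (fun y hy => by
          have e := supp_add (P t) (ne_of_mem_erase hy).symm
          exact hBn _ (by omega))
      simpa using this
    linarith
  have hsum := sum_le_sum (fun t (_ : t ∈ (univ : Finset (Fin (M + 1)))) => hup t)
  have hAsum : ∑ t, ∑ i, A (P t i 0) ≤ n * (2 * S) := by
    rw [sum_comm]
    have := sum_le_card_nsmul (univ : Finset (Fin n)) (fun i => ∑ t, A (P t i 0)) (2 * S) (by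
      intro i _
      simp only [hPr]
      split_ifs with hi
      · rw [Fin.sum_univ_eq_sum_range (fun t => A (t / 2))]
        exact half_sum A hA M
      · rw [Fin.sum_univ_eq_sum_range (fun t => A ((M - t) / 2))]
        have := sum_range_reflect (fun t => A (t / 2)) (M + 1)
        simp only [Nat.add_sub_cancel] at this
        rw [this]
        exact half_sum A hA M)
    simpa using this
  simp only [sum_add_distrib] at hsum
  simp at hsum
  have : 0 ≤ ((M : ℝ) + 1) * C := by positivity
  nlinarith

/-- For `n ≥ 3` voters and `m` alternatives, there is no
strategyproof SDS that is `α`-Condorcet-consistent for any `α > 2/m`. -/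
theorem no_strategyproof_alpha_condorcet_consistent (n m : ℕ) (hn : 3 ≤ n)
    (α : ℝ) (hα : 2 / (m : ℝ) < α) :
    ¬ ∃ F : Profile n m → Fin m → ℝ,
        IsSDS F ∧ Strategyproof F ∧ CondorcetConsistent F α := by
  rintro ⟨F, h1, h2, h5⟩
  rcases m with _ | M
  · have := h1.2 (fun _ => 1)
    simp at this
  · have := main_bound hn (symF_sds h1) (symF_sp h2) (symF_anon F) (symF_neut F) (symF_cc h5)
    push_cast at hα
    rw [div_lt_iff₀ (by positivity)] at hα
    linarith
end
end

section
/- Let m ≥ 3 and let ε ∈ [0,1]. Every strategyproof SDS that is (1−ε)/m-ex post efficient is γ-randomly dictatorial for some γ ≥ ε. -/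
open Finset

noncomputable section

lemma exists_ord {m : ℕ} (κ : Fin m → ℕ) : ∃ σ : Equiv.Perm (Fin m),
    ∀ a b, σ a < σ b ↔ (κ a < κ b ∨ (κ a = κ b ∧ a < b)) := by
  classical
  let k : Fin m → ℕ ×ₗ Fin m := fun a => toLex (κ a, a)
  have hk : ∀ a b, k a < k b ↔ (κ a < κ b ∨ (κ a = κ b ∧ a < b)) := by
    intro a b
    simp [k, Prod.Lex.lt_iff]
  have hinj : Function.Injective k := by
    intro a b h
    have : (κ a, a) = (κ b, b) := toLex.injective h
    exact (Prod.mk.inj this).2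
  have hc : ∀ a, (univ.filter (fun w => k w < k a)).card < m := by
    intro a
    have : (univ.filter (fun w => k w < k a)) ⊂ univ := by
      refine Finset.ssubset_univ_iff.2 ?_
      intro h
      have : a ∈ univ.filter (fun w => k w < k a) := by rw [h]; simp
      simp at this
    simpa using Finset.card_lt_card this
  let r : Fin m → Fin m := fun a => ⟨_, hc a⟩
  have hr : ∀ a b, k a < k b → r a < r b := by
    intro a b h
    show (univ.filter (fun w => k w < k a)).card < (univ.filter (fun w => k w < k b)).card
    apply Finset.card_lt_card
    refine ⟨?_, ?_⟩
    · intro w hw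
      simp only [mem_filter, mem_univ, true_and] at hw ⊢
      exact hw.trans h
    · intro hs
      have : a ∈ univ.filter (fun w => k w < k a) := hs (by simpa using h)
      simp at this
  have hri : Function.Injective r := by
    intro a b h
    rcases lt_trichotomy (k a) (k b) with h1 | h1 | h1
    · exact absurd h (hr _ _ h1).ne
    · exact hinj h1
    · exact absurd h (hr _ _ h1).ne'
  refine ⟨Equiv.ofBijective r (Finite.injective_iff_bijective.1 hri), ?_⟩
  intro a b
  rw [← hk]
  show r a < r b ↔ _
  constructor
  · intro h
    rcases lt_trichotomy (k a) (k b) with h1 | h1 | h1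
    · exact h1
    · rw [hinj h1] at h; exact absurd h (lt_irrefl _)
    · exact absurd h (hr _ _ h1).asymm
  · exact hr a b

def ordOf {m : ℕ} (κ : Fin m → ℕ) : Equiv.Perm (Fin m) := (exists_ord κ).choose

lemma ordOf_spec {m : ℕ} (κ : Fin m → ℕ) (a b : Fin m) :
    ordOf κ a < ordOf κ b ↔ (κ a < κ b ∨ (κ a = κ b ∧ a < b)) :=
  (exists_ord κ).choose_spec a b

lemma sp_set {n m : ℕ} {F : Profile n m → Fin m → ℝ} (hF : IsSDS F) (hsp : Strategyproof F)
    (R R' : Profile n m) (i : Fin n) (h : ∀ j, j ≠ i → R j = R' j) (S : Finset (Fin m))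
    (hS : ∀ a ∈ S, ∀ b, b ∉ S → R i a < R i b) :
    ∑ y ∈ S, F R' y ≤ ∑ y ∈ S, F R y := by
  classical
  by_cases hu : S = univ
  · subst hu; rw [hF.2, hF.2]
  · have hne : (univ \ S).Nonempty := by
      rw [Finset.sdiff_nonempty]
      intro hh; exact hu (Finset.univ_subset_iff.1 hh)
    obtain ⟨x, hx, hxm⟩ := Finset.exists_min_image (univ \ S) (fun z => R i z) hne
    have := hsp R R' i h x
    have he : univ.filter (fun y => R i y < R i x) = S := by
      ext y
      simp only [mem_filter, mem_univ, true_and]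
      simp only [mem_sdiff, mem_univ, true_and] at hx hxm
      constructor
      · intro hy
        by_contra hc
        exact absurd hy (not_lt.2 (hxm y hc))
      · intro hy; exact hS y hy x hx
    rwa [he] at this

lemma inv_single {n m : ℕ} {F : Profile n m → Fin m → ℝ} (hF : IsSDS F) (hsp : Strategyproof F)
    (R R' : Profile n m) (i : Fin n) (h : ∀ j, j ≠ i → R j = R' j) (y : Fin m)
    (hy : ∀ z, R i z < R i y ↔ R' i z < R' i y) : F R y = F R' y := by
  classical
  set C := univ.filter (fun z => R i z < R i y) with hC
  have hyC : y ∉ C := by simp [hC]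
  have m1 : ∀ z, z ∈ C ↔ R i z < R i y := by intro z; simp [hC]
  have m2 : ∀ z, z ∈ C ↔ R' i z < R' i y := by intro z; rw [m1, hy]
  have key : ∀ Q : Profile n m, (∀ z, z ∈ C ↔ Q i z < Q i y) →
      (∀ a ∈ C, ∀ b, b ∉ C → Q i a < Q i b) ∧
      (∀ a ∈ insert y C, ∀ b, b ∉ insert y C → Q i a < Q i b) := by
    intro Q hQ
    constructor
    · intro a ha b hb
      rw [hQ] at ha hb
      exact lt_of_lt_of_le ha (not_lt.1 hb)
    · intro a ha b hb
      simp only [mem_insert, not_or] at ha hb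
      have hb2 : Q i y < Q i b := by
        have h1 := hb.2
        rw [hQ] at h1
        refine lt_of_le_of_ne (not_lt.1 h1) ?_
        intro he; exact hb.1 ((Q i).injective he).symm
      rcases ha with rfl | ha
      · exact hb2
      · rw [hQ] at ha; exact ha.trans hb2
  have h' : ∀ j, j ≠ i → R' j = R j := fun j hj => (h j hj).symm
  obtain ⟨k1, k2⟩ := key R m1
  obtain ⟨k3, k4⟩ := key R' m2
  have a1 := sp_set hF hsp R R' i h C k1
  have a2 := sp_set hF hsp R R' i h _ k2
  have a3 := sp_set hF hsp R' R i h' C k3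
  have a4 := sp_set hF hsp R' R i h' _ k4
  rw [Finset.sum_insert hyC, Finset.sum_insert hyC] at a2 a4
  linarith

lemma inv_multi {n m : ℕ} {F : Profile n m → Fin m → ℝ} (hF : IsSDS F) (hsp : Strategyproof F)
    (R R' : Profile n m) (y : Fin m)
    (hy : ∀ j z, R j z < R j y ↔ R' j z < R' j y) : F R y = F R' y := by
  classical
  have key : ∀ s : Finset (Fin n), ∀ R' : Profile n m, (∀ j, j ∉ s → R j = R' j) →
      (∀ j z, R j z < R j y ↔ R' j z < R' j y) → F R y = F R' y := by
    intro s
    induction s using Finset.induction_on with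
    | empty =>
      intro R' h _
      have : R = R' := funext fun j => h j (by simp)
      rw [this]
    | insert i s hi ih =>
      intro R' h hy
      have e1 : F R y = F (Function.update R' i (R i)) y := by
        apply ih
        · intro j hj
          by_cases hji : j = i
          · subst hji; simp
          · rw [Function.update_of_ne hji]; exact h j (by simp [hji, hj])
        · intro j z
          by_cases hji : j = i
          · subst hji; simp
          · rw [Function.update_of_ne hji]; exact hy j z
      rw [e1]
      apply inv_single hF hsp _ _ i
      · intro j hj; rw [Function.update_of_ne hj]
      · intro z; simpa using hy i z
  exact key univ R' (by simp) hy

/-- order: `A`, then `y` (if not b), then `B \ A`, then `y` (if b), then rest -/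
def kap {m : ℕ} (y : Fin m) (A B : Finset (Fin m)) (b : Prop) : Fin m → ℕ :=
  open Classical in
  fun z => if z = y then (if b then 3 else 1) else if z ∈ A then 0 else if z ∈ B then 2 else 4

def mkP {n m : ℕ} (y : Fin m) (A B : Fin n → Finset (Fin m)) (b : Fin n → Prop) : Profile n m :=
  fun j => ordOf (kap y (A j) (B j) (b j))

def phi {n m : ℕ} (F : Profile n m → Fin m → ℝ) (y : Fin m) (U : Fin n → Finset (Fin m)) : ℝ :=
  F (mkP y U U (fun _ => False)) y

lemma mkP_ctr {n m : ℕ} (y : Fin m) (A B : Fin n → Finset (Fin m)) (b : Fin n → Prop)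
    (j : Fin n) (z : Fin m) (hz : z ≠ y) :
    mkP y A B b j z < mkP y A B b j y ↔ (z ∈ A j ∨ (b j ∧ z ∈ B j)) := by
  unfold mkP
  rw [ordOf_spec]
  unfold kap
  by_cases h1 : z ∈ A j <;> by_cases h2 : z ∈ B j <;> by_cases h3 : b j <;> simp [hz, h1, h2, h3]

lemma phi_eq {n m : ℕ} {F : Profile n m → Fin m → ℝ} (hF : IsSDS F) (hsp : Strategyproof F)
    (R : Profile n m) (y : Fin m) (U : Fin n → Finset (Fin m))
    (h : ∀ j z, z ≠ y → (R j z < R j y ↔ z ∈ U j)) : F R y = phi F y U := by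
  unfold phi
  apply inv_multi hF hsp
  intro j z
  by_cases hz : z = y
  · subst hz; simp
  · rw [h j z hz, mkP_ctr _ _ _ _ _ _ hz]; simp

/-- mkP contour invariance for other alternatives -/
lemma mkP_inv {n m : ℕ} (y : Fin m) (A B : Fin n → Finset (Fin m)) (b b' : Fin n → Prop)
    (j : Fin n) (x : Fin m) (hx : x ≠ y)
    (h : x ∈ A j ∨ x ∉ B j ∨ (b j ↔ b' j)) (z : Fin m) :
    mkP y A B b j z < mkP y A B b j x ↔ mkP y A B b' j z < mkP y A B b' j x := by
  unfold mkP
  rw [ordOf_spec, ordOf_spec]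
  unfold kap
  by_cases hz : z = y
  · subst hz
    by_cases h1 : x ∈ A j <;> by_cases h2 : x ∈ B j <;> by_cases h3 : b j <;>
      by_cases h4 : b' j <;> simp_all
  · simp [hx, hz]

lemma phi_mono {n m : ℕ} {F : Profile n m → Fin m → ℝ} (hF : IsSDS F) (hsp : Strategyproof F)
    (y : Fin m) (W : Fin n → Finset (Fin m)) (i : Fin n) (P P' : Finset (Fin m)) (h : P' ⊆ P) :
    phi F y (Function.update W i P) ≤ phi F y (Function.update W i P') := by
  classical
  set A := Function.update W i P'
  set B := Function.update W i P
  have hA : A i = P' := by simp [A]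
  have hB : B i = P := by simp [B]
  have hAB : ∀ j, j ≠ i → A j = B j := by
    intro j hj; simp [A, B, Function.update_of_ne hj]
  have e1 : F (mkP y A B (fun j => True)) y = phi F y B := by
    apply phi_eq hF hsp
    intro j z hz
    rw [mkP_ctr _ _ _ _ _ _ hz]
    by_cases hj : j = i
    · subst hj; rw [hA, hB]; simp; exact fun hh => h hh
    · rw [hAB j hj]; simp
  have e2 : F (mkP y A B (fun j => j ≠ i)) y = phi F y A := by
    apply phi_eq hF hsp
    intro j z hz
    rw [mkP_ctr _ _ _ _ _ _ hz]
    by_cases hj : j = i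
    · subst hj; simp
    · rw [hAB j hj]; simp
  rw [← e1, ← e2]
  have hsame : ∀ z ∈ P'.erase y, F (mkP y A B (fun j => True)) z = F (mkP y A B (fun j => j ≠ i)) z := by
    intro z hz
    simp only [mem_erase] at hz
    apply inv_multi hF hsp
    intro j w
    apply mkP_inv _ _ _ _ _ _ _ hz.1
    by_cases hj : j = i
    · subst hj; left; rw [hA]; exact hz.2
    · right; right; simp [hj]
  have := sp_set hF hsp (mkP y A B (fun j => j ≠ i)) (mkP y A B (fun j => True)) i (by
    intro j hj; unfold mkP; simp [hj]) (insert y (P'.erase y)) (by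
    intro a ha c hc
    simp only [mem_insert, mem_erase, not_or, not_and] at ha hc
    unfold mkP
    rw [ordOf_spec]
    left
    unfold kap
    have h1 : c ∉ P' := hc.2 hc.1
    rw [hA]
    rcases ha with rfl | ha
    · simp [hc.1, h1]; split_ifs <;> simp
    · simp [hc.1, h1, ha.1, ha.2]; split_ifs <;> simp)
  rw [Finset.sum_insert (by simp), Finset.sum_insert (by simp), Finset.sum_congr rfl hsame] at this
  linarith

lemma four {n m : ℕ} {F : Profile n m → Fin m → ℝ} (hF : IsSDS F)
    (a b c d : Profile n m) (x : Fin m) (B : Finset (Fin m)) (hx : x ∉ B)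
    (h1 : ∀ y, y ≠ x → y ∉ B → F a y = F b y) (h2 : ∀ y, y ≠ x → y ∉ B → F c y = F d y)
    (h3 : ∀ y ∈ B, F a y = F c y) (h4 : ∀ y ∈ B, F b y = F d y) :
    F b x - F a x = F d x - F c x := by
  classical
  have key : ∀ R : Profile n m, F R x + ∑ y ∈ B, F R y + ∑ y ∈ (insert x B)ᶜ, F R y = 1 := by
    intro R
    rw [← Finset.sum_insert hx, Finset.sum_add_sum_compl, hF.2]
  have g1 : ∑ y ∈ (insert x B)ᶜ, F a y = ∑ y ∈ (insert x B)ᶜ, F b y := by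
    apply Finset.sum_congr rfl
    intro y hy; simp at hy; exact h1 y hy.1 hy.2
  have g2 : ∑ y ∈ (insert x B)ᶜ, F c y = ∑ y ∈ (insert x B)ᶜ, F d y := by
    apply Finset.sum_congr rfl
    intro y hy; simp at hy; exact h2 y hy.1 hy.2
  have g3 := Finset.sum_congr rfl h3
  have g4 := Finset.sum_congr rfl h4
  have := key a
  have := key b
  have := key c
  have := key d
  linarith

lemma phi_D0 {n m : ℕ} {F : Profile n m → Fin m → ℝ} (hF : IsSDS F) (hsp : Strategyproof F)
    (y : Fin m) (i : Fin n) (W W' : Fin n → Finset (Fin m)) (P P' : Finset (Fin m))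
    (hP : P' ⊆ P) (hW : ∀ j, j ≠ i → W' j ⊆ W j)
    (hd : ∀ j, j ≠ i → ∀ z, z ≠ y → z ∈ P → z ∉ P' → z ∈ W j → z ∈ W' j) :
    phi F y (Function.update W i P') - phi F y (Function.update W i P) =
    phi F y (Function.update W' i P') - phi F y (Function.update W' i P) := by
  classical
  set A := Function.update W' i P' with hAd
  set B := Function.update W i P with hBd
  have hA : A i = P' := by simp [A]
  have hB : B i = P := by simp [B]
  have hA' : ∀ j, j ≠ i → A j = W' j := by
    intro j hj; simp [A, Function.update_of_ne hj]
  have hB' : ∀ j, j ≠ i → B j = W j := by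
    intro j hj; simp [B, Function.update_of_ne hj]
  have hsub : ∀ j, A j ⊆ B j := by
    intro j
    by_cases hj : j = i
    · subst hj; rw [hA, hB]; exact hP
    · rw [hA' j hj, hB' j hj]; exact hW j hj
  have gen : ∀ b : Fin n → Prop, ∀ U : Fin n → Finset (Fin m),
      (∀ j, b j → U j = B j) → (∀ j, ¬ b j → U j = A j) → F (mkP y A B b) y = phi F y U := by
    intro b U h1 h2
    apply phi_eq hF hsp
    intro j z hz
    rw [mkP_ctr _ _ _ _ _ _ hz]
    by_cases hb : b j
    · rw [h1 j hb]; simp [hb]; exact fun hh => hsub j hh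
    · rw [h2 j hb]; simp [hb]
  rw [← gen (fun j => True) B (by simp) (by simp), ← gen (fun j => False) A (by simp) (by simp),
    ← gen (fun j => j ≠ i) (Function.update W i P') (by
      intro j hj; simp [Function.update_of_ne hj, hB' j hj]) (by
      intro j hj; simp at hj; subst hj; simp [hA]),
    ← gen (fun j => j = i) (Function.update W' i P) (by
      intro j hj; subst hj; simp [hB]) (by
      intro j hj; simp [Function.update_of_ne hj, hA' j hj])]
  apply four hF _ _ _ _ y ((P \ P').erase y) (by simp)
  · intro x hx hxB
    apply inv_multi hF hsp
    intro j z
    apply mkP_inv _ _ _ _ _ _ _ hx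
    by_cases hj : j = i
    · subst hj; rw [hA, hB]; simp [hx] at hxB; by_cases x ∈ P <;> simp_all
    · simp [hj]
  · intro x hx hxB
    apply inv_multi hF hsp
    intro j z
    apply mkP_inv _ _ _ _ _ _ _ hx
    by_cases hj : j = i
    · subst hj; rw [hA, hB]; simp [hx] at hxB; by_cases x ∈ P <;> simp_all
    · simp [hj]
  · intro x hx
    simp at hx
    apply inv_multi hF hsp
    intro j z
    apply mkP_inv _ _ _ _ _ _ _ hx.1
    by_cases hj : j = i
    · simp [hj]
    · rw [hA' j hj, hB' j hj]
      have := hd j hj x hx.1 hx.2.1 hx.2.2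
      tauto
  · intro x hx
    simp at hx
    apply inv_multi hF hsp
    intro j z
    apply mkP_inv _ _ _ _ _ _ _ hx.1
    by_cases hj : j = i
    · simp [hj]
    · rw [hA' j hj, hB' j hj]
      have := hd j hj x hx.1 hx.2.1 hx.2.2
      tauto

lemma phi_D1 {n m : ℕ} {F : Profile n m → Fin m → ℝ} (hF : IsSDS F) (hsp : Strategyproof F)
    (y : Fin m) (i : Fin n) (W W' : Fin n → Finset (Fin m)) (P P' : Finset (Fin m))
    (hW : ∀ j, j ≠ i → W' j ⊆ W j)
    (hd : ∀ j, j ≠ i → ∀ z, z ≠ y → ¬ (z ∈ P ↔ z ∈ P') → (z ∈ W j ↔ z ∈ W' j)) :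
    phi F y (Function.update W i P') - phi F y (Function.update W i P) =
    phi F y (Function.update W' i P') - phi F y (Function.update W' i P) := by
  classical
  have h1 := phi_D0 hF hsp y i W W' P (P ∩ P') inter_subset_left hW (by
    intro j hj z hz h1 h2 h3
    simp only [mem_inter, not_and] at h2
    exact (hd j hj z hz (by tauto)).1 h3)
  have h2 := phi_D0 hF hsp y i W W' P' (P ∩ P') inter_subset_right hW (by
    intro j hj z hz h1 h2 h3
    simp only [mem_inter, not_and] at h2
    exact (hd j hj z hz (by tauto)).1 h3)
  linarith

lemma phi_D {n m : ℕ} {F : Profile n m → Fin m → ℝ} (hF : IsSDS F) (hsp : Strategyproof F)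
    (y : Fin m) (i : Fin n) (W W' : Fin n → Finset (Fin m)) (P P' : Finset (Fin m))
    (hd : ∀ j, j ≠ i → ∀ z, z ≠ y → ¬ (z ∈ P ↔ z ∈ P') → (z ∈ W j ↔ z ∈ W' j)) :
    phi F y (Function.update W i P') - phi F y (Function.update W i P) =
    phi F y (Function.update W' i P') - phi F y (Function.update W' i P) := by
  classical
  have h1 := phi_D1 hF hsp y i W (fun j => W j ∩ W' j) P P' (fun _ _ => inter_subset_left) (by
    intro j hj z hz h
    have := hd j hj z hz h
    simp only [mem_inter]; tauto)
  have h2 := phi_D1 hF hsp y i W' (fun j => W j ∩ W' j) P P' (fun _ _ => inter_subset_right) (by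
    intro j hj z hz h
    have := hd j hj z hz h
    simp only [mem_inter]; tauto)
  linarith

def ctr {n m : ℕ} (R : Profile n m) (y : Fin m) : Fin n → Finset (Fin m) :=
  fun j => univ.filter (fun z => R j z < R j y)

lemma upd_eq {n m : ℕ} {F : Profile n m → Fin m → ℝ} (hF : IsSDS F) (hsp : Strategyproof F)
    (R : Profile n m) (i : Fin n) (σ : Equiv.Perm (Fin m)) (y : Fin m) (S : Finset (Fin m))
    (hS : ∀ z, z ≠ y → (σ z < σ y ↔ z ∈ S)) :
    F (Function.update R i σ) y = phi F y (Function.update (ctr R y) i S) := by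
  apply phi_eq hF hsp
  intro j z hz
  by_cases hj : j = i
  · subst hj; simpa using hS z hz
  · rw [Function.update_of_ne hj, Function.update_of_ne hj]; simp [ctr]

lemma swap_fact {n m : ℕ} {F : Profile n m → Fin m → ℝ} (hF : IsSDS F) (hsp : Strategyproof F)
    (R : Profile n m) (i : Fin n) (S : Finset (Fin m)) (x y : Fin m) (hxy : x ≠ y)
    (hx : x ∉ S) (hy : y ∉ S) :
    phi F x (Function.update (ctr R x) i S) + phi F y (Function.update (ctr R y) i (insert x S)) =
    phi F y (Function.update (ctr R y) i S) + phi F x (Function.update (ctr R x) i (insert y S)) := by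
  classical
  let κ : Fin m → Fin m → Fin m → ℕ := fun x y z => if z ∈ S then 0 else if z = x then 1 else
    if z = y then 2 else 3
  have h1 : ∀ x y : Fin m, x ≠ y → x ∉ S → y ∉ S →
      F (Function.update R i (ordOf (κ x y))) x = phi F x (Function.update (ctr R x) i S) := by
    intro x y hxy hx hy
    apply upd_eq hF hsp
    intro z hz
    rw [ordOf_spec]
    by_cases h1 : z ∈ S
    · simp [κ, h1, hx]
    · simp [κ, h1, hx, hz]; split_ifs <;> simp
  have h2 : ∀ x y : Fin m, x ≠ y → x ∉ S → y ∉ S →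
      F (Function.update R i (ordOf (κ x y))) y
        = phi F y (Function.update (ctr R y) i (insert x S)) := by
    intro x y hxy hx hy
    apply upd_eq hF hsp
    intro z hz
    rw [ordOf_spec]
    by_cases h1 : z ∈ S
    · simp [κ, h1, hy, hxy.symm]
    · by_cases h2 : z = x
      · subst h2; simp [κ, h1, hy, hz, hxy.symm]
      · simp [κ, h1, hy, hz, h2, hxy.symm]
  have hoff : ∀ z, z ≠ x → z ≠ y → F (Function.update R i (ordOf (κ x y))) z
      = F (Function.update R i (ordOf (κ y x))) z := by
    intro z hzx hzy
    apply inv_single hF hsp _ _ i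
    · intro j hj; simp [Function.update_of_ne hj]
    · intro w
      simp only [Function.update_self]
      rw [ordOf_spec, ordOf_spec]
      simp only [κ, hzx, hzy, if_false]
      by_cases h1 : w ∈ S
      · simp [h1]
      · by_cases h2 : w = x
        · subst h2; by_cases h3 : z ∈ S <;> simp [h1, h3, hxy]
        · by_cases h4 : w = y
          · subst h4; by_cases h3 : z ∈ S <;> simp [h1, h2, h3]
          · simp [h1, h2, h4]
  rw [← h1 x y hxy hx hy, ← h2 x y hxy hx hy, ← h1 y x hxy.symm hy hx, ← h2 y x hxy.symm hy hx]
  have key : ∀ R : Profile n m, F R x + F R y + ∑ z ∈ ({x, y} : Finset (Fin m))ᶜ, F R z = 1 := by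
    intro R
    rw [← Finset.sum_pair hxy, Finset.sum_add_sum_compl, hF.2]
  have k1 := key (Function.update R i (ordOf (κ x y)))
  have k2 := key (Function.update R i (ordOf (κ y x)))
  have k3 : ∑ z ∈ ({x, y} : Finset (Fin m))ᶜ, F (Function.update R i (ordOf (κ x y))) z =
      ∑ z ∈ ({x, y} : Finset (Fin m))ᶜ, F (Function.update R i (ordOf (κ y x))) z := by
    apply Finset.sum_congr rfl
    intro z hz; simp at hz; exact hoff z hz.1 hz.2
  linarith

lemma cover {n m : ℕ} {F : Profile n m → Fin m → ℝ} (hF : IsSDS F) (hsp : Strategyproof F)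
    (R : Profile n m) (i : Fin n) (κ : Fin m → ℕ) (C : Fin m → Finset (Fin m))
    (hC : ∀ y, ∀ z ∈ C y, κ z < κ y) :
    1 ≤ ∑ y, phi F y (Function.update (ctr R y) i (C y)) := by
  classical
  rw [← hF.2 (Function.update R i (ordOf κ))]
  apply Finset.sum_le_sum
  intro y _
  rw [upd_eq hF hsp R i (ordOf κ) y (univ.filter (fun z => ordOf κ z < ordOf κ y)) (by simp)]
  apply phi_mono hF hsp
  intro z hz
  simp only [mem_filter, mem_univ, true_and]
  rw [ordOf_spec]
  exact Or.inl (hC y z hz)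

lemma split2 {m : ℕ} (x y : Fin m) (h : x ≠ y) (f : Fin m → ℝ) :
    ∑ z, f z = f x + f y + ∑ z ∈ (univ.erase x).erase y, f z := by
  rw [← Finset.add_sum_erase univ f (mem_univ x),
    ← Finset.add_sum_erase (univ.erase x) f (a := y) (by simp [h.symm]), add_assoc]

lemma arith {m : ℕ} (hm : 3 ≤ m) (u : Fin m → Finset (Fin m) → ℝ) (x0 y0 : Fin m) (hne : x0 ≠ y0)
    (γ : ℝ)
    (hswap : ∀ S x y, x ≠ y → x ∉ S → y ∉ S → u x S + u y (insert x S) = u y S + u x (insert y S))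
    (hcov : ∀ (κ : Fin m → ℕ) (C : Fin m → Finset (Fin m)), (∀ y, ∀ z ∈ C y, κ z < κ y) →
      1 ≤ ∑ y, u y (C y))
    (hb : ∀ z, z ≠ x0 → z ≠ y0 → u y0 ∅ - u y0 {x0} - γ ≤ u y0 {z} - u y0 {z, x0})
    (he : γ ≤ u y0 ∅ - u y0 {x0}) :
    ((m : ℝ) - 1) * (1 - γ) ≤ ∑ x, ∑ y ∈ univ.erase x, u y {x} := by
  classical
  set Z := (univ.erase x0).erase y0 with hZ
  have hZm : ∀ z, z ∈ Z ↔ z ≠ y0 ∧ z ≠ x0 := by intro z; simp [hZ]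
  have hcard : (Z.card : ℝ) = (m : ℝ) - 2 := by
    have : Z.card + 2 = m := by
      rw [hZ, Finset.card_erase_of_mem (by simp [hne.symm]), Finset.card_erase_of_mem (by simp)]
      simp; omega
    have h2 : ((Z.card + 2 : ℕ) : ℝ) = m := by rw [this]
    push_cast at h2; linarith
  set e := u y0 ∅ - u y0 {x0} with hedef
  set q := u x0 ∅ + u y0 {x0} with hq
  have hq2 : q = u y0 ∅ + u x0 {y0} := by
    have := hswap ∅ x0 y0 hne (by simp) (by simp)
    simpa using this
  -- cover with x0, y0 on top
  have c1 : 1 ≤ q + ∑ z ∈ Z, u z {x0, y0} := by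
    have := hcov (fun z => if z = x0 then 0 else if z = y0 then 1 else 2)
      (fun z => if z = x0 then ∅ else if z = y0 then {x0} else {x0, y0}) (by
        intro y z hz
        by_cases h1 : y = x0
        · simp [h1] at hz
        · by_cases h2 : y = y0
          · simp [h2, hne.symm] at hz; simp [hz, h2, hne.symm]
          · simp [h1, h2] at hz
            rcases hz with rfl | rfl
            · simp [h1, h2]
            · simp [h1, h2, hne.symm])
    rw [split2 x0 y0 hne] at this
    simp only [if_true, hne.symm, if_false] at this
    have e : ∑ z ∈ Z, u z (if z = x0 then ∅ else if z = y0 then {x0} else {x0, y0}) =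
        ∑ z ∈ Z, u z {x0, y0} := by
      apply Finset.sum_congr rfl
      intro z hz
      rw [hZm] at hz
      simp [hz.1, hz.2]
    rw [e] at this
    exact this
  -- row bounds
  have c2 : ∀ z ∈ Z, 1 ≤ u z ∅ + u x0 {z} + u y0 {z, x0} + ∑ w ∈ Z.erase z, u w {z} := by
    intro z hz
    have hz' := (hZm z).1 hz
    obtain ⟨h1, h2⟩ := hz'
    have := hcov (fun w => if w = z then 0 else if w = x0 then 1 else 2)
      (fun w => if w = z then ∅ else if w = x0 then {z} else if w = y0 then {z, x0} else {z}) (by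
        intro y w hw
        by_cases k1 : y = z
        · simp [k1] at hw
        · by_cases k2 : y = x0
          · simp [k2, h2.symm] at hw; simp [hw, k2, h2.symm]
          · by_cases k3 : y = y0
            · simp [k3, h1.symm, hne.symm] at hw
              rcases hw with rfl | rfl
              · simp [k1, k2]
              · simp [k1, k2, h2.symm]
            · simp [k1, k2, k3] at hw; subst hw; simp [k1, k2])
    rw [split2 x0 y0 hne, ← Finset.add_sum_erase _ _ hz] at this
    simp only [if_true, hne.symm, if_false, h2.symm, h1.symm] at this
    have e : ∑ w ∈ Z.erase z, u w (if w = z then ∅ else if w = x0 then {z} else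
        if w = y0 then {z, x0} else {z}) = ∑ w ∈ Z.erase z, u w {z} := by
      apply Finset.sum_congr rfl
      intro w hw
      rw [mem_erase, hZm] at hw
      simp [hw.1, hw.2.1, hw.2.2]
    rw [e] at this
    linarith
  -- rewrite total
  have r1 : ∑ y ∈ univ.erase x0, u y {x0} = u y0 {x0} + ∑ z ∈ Z, u z {x0} := by
    rw [hZ, Finset.add_sum_erase _ (fun y => u y {x0}) (by simp [hne.symm])]
  have r2 : ∑ y ∈ univ.erase y0, u y {y0} = u x0 {y0} + ∑ z ∈ Z, u z {y0} := by
    rw [hZ, Finset.erase_right_comm,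
      Finset.add_sum_erase _ (fun y => u y {y0}) (by simp [hne])]
  have r3 : ∀ z ∈ Z, ∑ y ∈ univ.erase z, u y {z} =
      u x0 {z} + u y0 {z} + ∑ w ∈ Z.erase z, u w {z} := by
    intro z hz
    have hz' := (hZm z).1 hz
    have a1 := split2 x0 y0 hne (fun y => u y {z})
    have a2 := Finset.add_sum_erase univ (fun y => u y {z}) (mem_univ z)
    have a3 := Finset.add_sum_erase Z (fun y => u y {z}) hz
    simp only [← hZ] at a1 a2 a3
    linarith
  have hsw : ∀ z ∈ Z, u z ∅ + (1 - γ) + (e - γ) + u z {x0, y0} - u z ∅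
      ≤ u z {x0} + u z {y0} + ∑ y ∈ univ.erase z, u y {z} := by
    intro z hz
    obtain ⟨h1, h2⟩ := (hZm z).1 hz
    rw [r3 z hz]
    have s1 := hswap ∅ x0 z h2.symm (by simp) (by simp)
    have s2 := hswap ∅ y0 z h1.symm (by simp) (by simp)
    have s3 := hswap {x0} y0 z h1.symm (by simp [hne.symm]) (by simp [h2])
    simp only [insert_empty_eq] at s1 s2
    rw [Finset.pair_comm y0 x0] at s3
    have b := hb z h2 h1
    have c := c2 z hz
    linarith
  rw [split2 x0 y0 hne, r1, r2, ← hZ]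
  have t := Finset.sum_le_sum hsw
  simp only [Finset.sum_add_distrib, Finset.sum_sub_distrib, Finset.sum_const, nsmul_eq_mul,
    hcard] at t
  have hm' : (3 : ℝ) ≤ m := by exact_mod_cast hm
  have : ((m : ℝ) - 3) * γ ≤ (m - 3) * e := mul_le_mul_of_nonneg_left he (by linarith)
  nlinarith

lemma cond_b {n m : ℕ} {F : Profile n m → Fin m → ℝ} (hF : IsSDS F) (hsp : Strategyproof F)
    (T W : Fin n → Finset (Fin m)) (i : Fin n) (x y z : Fin m) (hzx : z ≠ x) :
    phi F y (Function.update T i ∅) - phi F y (Function.update T i {x}) -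
      (phi F y (Function.update W i ∅) - phi F y (Function.update W i {x})) ≤
    phi F y (Function.update T i {z}) - phi F y (Function.update T i {z, x}) := by
  classical
  let V : Fin n → Finset (Fin m) := fun j => if x ∈ W j then insert x (T j) else (T j).erase x
  have hV1 : ∀ j w, w ≠ x → (w ∈ T j ↔ w ∈ V j) := by
    intro j w hw
    by_cases h : x ∈ W j <;> simp [V, h, hw]
  have hV2 : ∀ j, (x ∈ V j ↔ x ∈ W j) := by
    intro j
    by_cases h : x ∈ W j <;> simp [V, h]
  have d1 := phi_D hF hsp y i T V {z} ∅ (by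
    intro j _ w _ h
    apply hV1
    rintro rfl
    simp [hzx.symm] at h)
  have d2 := phi_D hF hsp y i T V {z, x} {x} (by
    intro j _ w _ h
    apply hV1
    rintro rfl
    simp at h)
  have d3 := phi_D hF hsp y i V W {x} ∅ (by
    intro j _ w _ h
    have : w = x := by simpa using h
    subst this; exact hV2 j)
  have d4 := phi_D hF hsp y i V W {z, x} {z} (by
    intro j _ w _ h
    have : w = x := by
      by_contra hc
      simp [hc] at h
    subst this; exact hV2 j)
  have := phi_mono hF hsp y W i {z, x} {z} (by simp)
  linarith

def baseQ (n m : ℕ) (k : ℕ) : Profile n m :=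
  fun j => if j.val < k then Equiv.refl _ else Fin.revPerm

lemma tele {n m : ℕ} {F : Profile n m → Fin m → ℝ} (hF : IsSDS F) (hsp : Strategyproof F)
    (y : Fin m) (U : Finset (Fin m)) :
    phi F y (fun _ => U) = F (baseQ n m 0) y + ∑ i : Fin n,
      (phi F y (Function.update (ctr (baseQ n m i) y) i U) - F (baseQ n m i) y) := by
  classical
  let H : ℕ → Fin n → Finset (Fin m) := fun k j =>
    if j.val < k then U else univ.filter (fun z => y < z)
  have h0 : phi F y (H 0) = F (baseQ n m 0) y := by
    symm
    apply phi_eq hF hsp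
    intro j z hz
    simp [H, baseQ]
  have hn : H n = fun _ => U := by
    funext j; simp [H]
  have hstep : ∀ i : Fin n, phi F y (H (i + 1)) - phi F y (H i) =
      phi F y (Function.update (ctr (baseQ n m i) y) i U) - F (baseQ n m i) y := by
    intro i
    have e1 : H (i + 1) = Function.update (H i) i U := by
      funext j
      by_cases hj : j = i
      · subst hj; simp [H]
      · rw [Function.update_of_ne hj]
        have : j.val ≠ i.val := fun h => hj (Fin.ext h)
        have : (j.val < i.val + 1) ↔ j.val < i.val := by omega
        simp only [H, this]
    have e2 : H i = Function.update (H i) i (univ.filter (fun z => y < z)) := by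
      funext j
      by_cases hj : j = i
      · subst hj; simp [H]
      · rw [Function.update_of_ne hj]
    have e3 : F (baseQ n m i) y =
        phi F y (Function.update (ctr (baseQ n m i) y) i (univ.filter (fun z => y < z))) := by
      apply phi_eq hF hsp
      intro j z hz
      by_cases hj : j = i
      · subst hj; simp [baseQ]
      · rw [Function.update_of_ne hj]; simp [ctr]
    rw [e1, e3]
    conv_lhs => rw [e2]
    rw [Function.update_idem]
    apply phi_D hF hsp
    intro j hj z hz h
    by_cases hji : j.val < i.val
    · simp only [H, ctr, baseQ, hji, if_true, mem_filter, mem_univ, true_and, Equiv.refl_apply]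
      simp only [mem_filter, mem_univ, true_and] at h
      have : (y < z) ↔ ¬ (z < y) := by
        rw [not_lt]; exact ⟨le_of_lt, fun h => lt_of_le_of_ne h hz.symm⟩
      tauto
    · simp [H, ctr, baseQ, hji]
  have ht := Finset.sum_range_sub (fun k => phi F y (H k)) n
  rw [← Fin.sum_univ_eq_sum_range (fun k => phi F y (H (k + 1)) - phi F y (H k)) n] at ht
  rw [← hn, ← h0, ← Finset.sum_congr rfl (fun i _ => hstep i)]
  linarith

lemma key_bound {n m : ℕ} (hm : 3 ≤ m) {F : Profile n m → Fin m → ℝ} (hF : IsSDS F)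
    (hsp : Strategyproof F) (ε : ℝ) (heff : ExPostEff F ((1 - ε) / (m : ℝ)))
    (γ : Fin n → ℝ)
    (h1 : ∀ i W x y, x ≠ y →
      γ i ≤ phi F y (Function.update W i ∅) - phi F y (Function.update W i {x}))
    (h2 : ∀ i, ∃ W x y, x ≠ y ∧
      γ i = phi F y (Function.update W i ∅) - phi F y (Function.update W i {x})) :
    ε ≤ ∑ i, γ i := by
  classical
  have hm' : (3 : ℝ) ≤ m := by exact_mod_cast hm
  have hL : ∀ R : Profile n m, ∑ x, ∑ y ∈ univ.erase x, F R y = (m : ℝ) - 1 := by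
    intro R
    have : ∀ x, ∑ y ∈ univ.erase x, F R y = 1 - F R x := by
      intro x
      have := Finset.add_sum_erase univ (F R) (mem_univ x)
      rw [hF.2] at this
      linarith
    simp only [this, Finset.sum_sub_distrib, hF.2]
    simp
  have hV : ∀ i : Fin n, ((m : ℝ) - 1) * (1 - γ i) ≤ ∑ x, ∑ y ∈ univ.erase x,
      phi F y (Function.update (ctr (baseQ n m i) y) i {x}) := by
    intro i
    obtain ⟨W, x, y, hxy, hW⟩ := h2 i
    apply arith hm (fun y S => phi F y (Function.update (ctr (baseQ n m i) y) i S)) x y hxy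
    · intro S a b hab ha hb
      exact swap_fact hF hsp _ i S a b hab ha hb
    · intro κ C hC
      exact cover hF hsp _ i κ C hC
    · intro z hzx hzy
      rw [hW]
      exact cond_b hF hsp _ W i x y z hzx
    · exact h1 i _ x y hxy
  have htot : ∑ x : Fin m, ∑ y ∈ univ.erase x, phi F y (fun _ : Fin n => {x}) ≤
      (m : ℝ) * (((m : ℝ) - 1) * ((1 - ε) / m)) := by
    have : ∀ x : Fin m, ∑ y ∈ univ.erase x, phi F y (fun _ : Fin n => {x}) ≤
        ((m : ℝ) - 1) * ((1 - ε) / m) := by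
      intro x
      have : ∀ y ∈ univ.erase x, phi F y (fun _ : Fin n => {x}) ≤ (1 - ε) / m := by
        intro y hy
        have hxy : x ≠ y := by simpa [eq_comm] using hy
        apply heff
        refine ⟨x, fun i => ?_⟩
        rw [mkP_ctr _ _ _ _ _ _ hxy]
        simp
      have := Finset.sum_le_card_nsmul _ _ _ this
      rw [Finset.card_erase_of_mem (mem_univ x), nsmul_eq_mul] at this
      simp only [card_univ, Fintype.card_fin] at this
      rwa [Nat.cast_sub (by omega), Nat.cast_one] at this
    have := Finset.sum_le_card_nsmul univ _ _ (fun x _ => this x)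
    simpa using this
  have heq : ∑ x : Fin m, ∑ y ∈ univ.erase x, phi F y (fun _ : Fin n => {x}) =
      ((m : ℝ) - 1) + ∑ i : Fin n, ((∑ x, ∑ y ∈ univ.erase x,
      phi F y (Function.update (ctr (baseQ n m i) y) i {x})) - ((m : ℝ) - 1)) := by
    rw [← hL (baseQ n m 0)]
    simp only [tele hF hsp _ _]
    simp only [Finset.sum_add_distrib]
    congr 1
    have : ∀ x : Fin m, ∑ y ∈ univ.erase x, ∑ i : Fin n,
        (phi F y (Function.update (ctr (baseQ n m i) y) i {x}) - F (baseQ n m i) y) =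
        ∑ i : Fin n, ∑ y ∈ univ.erase x,
        (phi F y (Function.update (ctr (baseQ n m i) y) i {x}) - F (baseQ n m i) y) :=
      fun x => Finset.sum_comm
    rw [Finset.sum_congr rfl (fun x _ => this x), Finset.sum_comm]
    apply Finset.sum_congr rfl
    intro i _
    rw [hL, ← hL (baseQ n m i)]
    simp only [Finset.sum_sub_distrib]
  have hs : ∑ i : Fin n, (-(((m : ℝ) - 1) * γ i)) ≤ ∑ i : Fin n, ((∑ x, ∑ y ∈ univ.erase x,
      phi F y (Function.update (ctr (baseQ n m i) y) i {x})) - ((m : ℝ) - 1)) := by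
    apply Finset.sum_le_sum
    intro i _
    have := hV i
    linarith
  rw [Finset.sum_neg_distrib, ← Finset.mul_sum] at hs
  have hmm : (m : ℝ) * (((m : ℝ) - 1) * ((1 - ε) / m)) = ((m : ℝ) - 1) * (1 - ε) := by
    field_simp
  rw [hmm] at htot
  have : ((m : ℝ) - 1) * ε ≤ ((m : ℝ) - 1) * ∑ i, γ i := by linarith
  exact le_of_mul_le_mul_left this (by linarith)

def topA {m : ℕ} (hm : 0 < m) (σ : Equiv.Perm (Fin m)) : Fin m := σ.symm ⟨0, hm⟩

lemma topA_le {m : ℕ} (hm : 0 < m) (σ : Equiv.Perm (Fin m)) (y : Fin m) :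
    σ (topA hm σ) ≤ σ y := by
  simp [topA, Fin.le_def]

lemma dictProb_eq {n m : ℕ} (hm : 0 < m) (R : Profile n m) (i : Fin n) (x : Fin m) :
    dictProb R i x = if x = topA hm (R i) then 1 else 0 := by
  unfold dictProb
  congr 1
  apply propext
  constructor
  · intro h
    exact (R i).injective (le_antisymm (h _) (topA_le hm (R i) x))
  · rintro rfl y
    exact topA_le hm _ y

lemma sum_dict {n m : ℕ} (hm : 0 < m) (R : Profile n m) (γ : Fin n → ℝ) (U : Finset (Fin m)) :
    ∑ y ∈ U, ∑ j, γ j * dictProb R j y = ∑ j, γ j * (if topA hm (R j) ∈ U then 1 else 0) := by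
  classical
  rw [Finset.sum_comm]
  apply Finset.sum_congr rfl
  intro j _
  rw [← Finset.mul_sum]
  congr 1
  simp only [dictProb_eq hm]
  rw [Finset.sum_ite_eq']

lemma lower {n m : ℕ} (hm : 3 ≤ m) {F : Profile n m → Fin m → ℝ} (hF : IsSDS F)
    (γ : Fin n → ℝ)
    (h1 : ∀ i W x y, x ≠ y →
      γ i ≤ phi F y (Function.update W i ∅) - phi F y (Function.update W i {x}))
    (x : Fin m) (s : Finset (Fin n)) : ∀ U : Fin n → Finset (Fin m), (∀ i ∈ s, U i = ∅) →
      ∑ i ∈ s, γ i ≤ phi F x U := by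
  classical
  induction s using Finset.induction_on with
  | empty => intro U _; simp only [Finset.sum_empty]; exact hF.1 _ _
  | insert i s hi ih =>
    intro U hU
    rw [Finset.sum_insert hi]
    have : Nontrivial (Fin m) := Fin.nontrivial_iff_two_le.2 (by omega)
    obtain ⟨w, hw⟩ := exists_ne x
    have a := h1 i U w x hw
    have e : Function.update U i ∅ = U := by
      rw [← hU i (by simp)]; simp
    rw [e] at a
    have b := ih (Function.update U i {w}) (by
      intro j hj
      have : j ≠ i := by rintro rfl; exact hi hj
      rw [Function.update_of_ne this]
      exact hU j (by simp [hj]))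
    linarith

lemma dict_le {n m : ℕ} (hm : 3 ≤ m) {F : Profile n m → Fin m → ℝ} (hF : IsSDS F)
    (hsp : Strategyproof F) (γ : Fin n → ℝ)
    (h1 : ∀ i W x y, x ≠ y →
      γ i ≤ phi F y (Function.update W i ∅) - phi F y (Function.update W i {x}))
    (R : Profile n m) (x : Fin m) : ∑ i, γ i * dictProb R i x ≤ F R x := by
  classical
  have e : F R x = phi F x (ctr R x) := by
    apply phi_eq hF hsp
    intro j z _; simp [ctr]
  have := lower hm hF γ h1 x (univ.filter (fun i => ∀ y, R i x ≤ R i y)) (ctr R x) (by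
    intro i hi
    simp only [mem_filter, mem_univ, true_and] at hi
    unfold ctr
    rw [Finset.filter_eq_empty_iff]
    intro z _
    exact not_lt.2 (hi z))
  rw [e]
  refine le_trans (le_of_eq ?_) this
  rw [Finset.sum_filter]
  apply Finset.sum_congr rfl
  intro i _
  unfold dictProb
  split_ifs <;> simp

lemma drop {n m : ℕ} (hm : 0 < m) {F : Profile n m → Fin m → ℝ} (hF : IsSDS F)
    (hsp : Strategyproof F) (γ : Fin n → ℝ)
    (h1 : ∀ i W x y, x ≠ y →
      γ i ≤ phi F y (Function.update W i ∅) - phi F y (Function.update W i {x}))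
    (R R' : Profile n m) (i : Fin n) (h : ∀ j, j ≠ i → R j = R' j) (U : Finset (Fin m))
    (hU : ∀ a ∈ U, ∀ b, b ∉ U → R i a < R i b)
    (ht : topA hm (R i) ∈ U) (hz : topA hm (R' i) ∉ U) :
    ∑ y ∈ U, F R' y + γ i ≤ ∑ y ∈ U, F R y := by
  classical
  set v := topA hm (R i) with hv
  set z := topA hm (R' i) with hzd
  have hvz : v ≠ z := by rintro hh; rw [hh] at ht; exact hz ht
  let κ1 : Fin m → ℕ := fun w => if w = z then 0 else if w = v then 1 else if w ∈ U then 2 else 3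
  let κ2 : Fin m → ℕ := fun w => if w = v then 0 else if w = z then 1 else if w ∈ U then 2 else 3
  set R1 := Function.update R i (ordOf κ1) with hR1
  set R2 := Function.update R i (ordOf κ2) with hR2
  have s1 : F R' z = F R1 z := by
    apply inv_single hF hsp _ _ i
    · intro j hj; rw [hR1, Function.update_of_ne hj, h j hj]
    · intro w
      have a1 : ¬ (R' i w < R' i z) := not_lt.2 (topA_le hm _ w)
      have a2 : ¬ (R1 i w < R1 i z) := by
        rw [hR1, Function.update_self, ordOf_spec]
        by_cases hw : w = z
        · simp [hw]
        · simp only [κ1, hw, if_true, if_false]; split_ifs <;> simp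
      tauto
  have s2 := sp_set hF hsp R1 R' i (by
    intro j hj; rw [hR1, Function.update_of_ne hj, h j hj]) (insert z U) (by
    intro a ha b hb
    simp only [mem_insert, not_or] at ha hb
    have hbv : b ≠ v := by rintro rfl; exact hb.2 ht
    rw [hR1, Function.update_self, ordOf_spec]
    left
    simp only [κ1, hb.1, hb.2, hbv, if_false]
    rcases ha with rfl | ha
    · simp
    · simp only [ha, if_true]; split_ifs <;> simp)
  rw [Finset.sum_insert hz, Finset.sum_insert hz] at s2
  have s3 : γ i ≤ F R2 v - F R1 v := by
    rw [hR2, hR1, upd_eq hF hsp R i (ordOf κ2) v ∅ (by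
      intro w hw
      rw [ordOf_spec]
      simp only [κ2, hw, if_true, if_false]; split_ifs <;> simp), upd_eq hF hsp R i (ordOf κ1) v {z} (by
      intro w hw
      rw [ordOf_spec]
      by_cases hwz : w = z
      · simp [κ1, hwz, hvz]
      · simp [κ1, hwz, hvz, hw]; split_ifs <;> simp)]
    exact h1 i _ z v hvz.symm
  have s4 : ∀ y ∈ U.erase v, F R1 y = F R2 y := by
    intro y hy
    rw [mem_erase] at hy
    have hyz : y ≠ z := by rintro rfl; exact hz hy.2
    apply inv_single hF hsp _ _ i
    · intro j hj; rw [hR1, hR2, Function.update_of_ne hj, Function.update_of_ne hj]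
    · intro w
      rw [hR1, hR2, Function.update_self, Function.update_self, ordOf_spec, ordOf_spec]
      simp only [κ1, κ2, hyz, hy.1, hy.2, if_true, if_false]
      by_cases hwz : w = z
      · simp [hwz, hvz.symm]
      · by_cases hwv : w = v
        · simp [hwv, hvz]
        · simp [hwz, hwv]
  have s5 := sp_set hF hsp R R2 i (by
    intro j hj; rw [hR2, Function.update_of_ne hj]) U hU
  have e1 := Finset.add_sum_erase U (F R1) ht
  have e2 := Finset.add_sum_erase U (F R2) ht
  have e3 := Finset.sum_congr rfl s4
  linarith

lemma rest_sp {n m : ℕ} (hm : 0 < m) {F : Profile n m → Fin m → ℝ} (hF : IsSDS F)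
    (hsp : Strategyproof F) (γ : Fin n → ℝ) (hγ : ∀ i, 0 ≤ γ i)
    (h1 : ∀ i W x y, x ≠ y →
      γ i ≤ phi F y (Function.update W i ∅) - phi F y (Function.update W i {x})) :
    Strategyproof (fun R x => F R x - ∑ i, γ i * dictProb R i x) := by
  classical
  intro R R' i h x
  set U := univ.filter (fun y => R i y < R i x) with hUd
  have hUm : ∀ y, y ∈ U ↔ R i y < R i x := by intro y; simp [hUd]
  have hU : ∀ a ∈ U, ∀ b, b ∉ U → R i a < R i b := by
    intro a ha b hb
    rw [hUm] at ha hb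
    exact lt_of_lt_of_le ha (not_lt.1 hb)
  simp only [Finset.sum_sub_distrib]
  rw [sum_dict hm, sum_dict hm, ← Finset.add_sum_erase univ _ (mem_univ i),
    ← Finset.add_sum_erase univ (fun j => γ j * (if topA hm (R j) ∈ U then 1 else 0)) (mem_univ i)]
  have e : ∑ j ∈ univ.erase i, γ j * (if topA hm (R' j) ∈ U then (1 : ℝ) else 0) =
      ∑ j ∈ univ.erase i, γ j * (if topA hm (R j) ∈ U then (1 : ℝ) else 0) := by
    apply Finset.sum_congr rfl
    intro j hj
    rw [h j (by simpa using hj)]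
  rw [e]
  have b := sp_set hF hsp R R' i h U hU
  by_cases c1 : topA hm (R i) ∈ U
  · by_cases c2 : topA hm (R' i) ∈ U
    · simp only [c1, c2, if_true]; linarith
    · have := drop hm hF hsp γ h1 R R' i h U hU c1 c2
      simp only [c1, c2, if_true, if_false]; linarith
  · have := hγ i
    have : 0 ≤ γ i * (if topA hm (R' i) ∈ U then (1 : ℝ) else 0) := by
      split_ifs <;> simp [this]
    simp only [c1, if_false]; linarith

lemma max_bound {n m : ℕ} (hm : 0 < m) {F : Profile n m → Fin m → ℝ} (hF : IsSDS F)
    (hsp : Strategyproof F) (γ : Fin n → ℝ)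
    (h2 : ∀ i, ∃ W x y, x ≠ y ∧
      γ i = phi F y (Function.update W i ∅) - phi F y (Function.update W i {x}))
    (c : ℝ) (hc1 : c ≤ 1) (hd : DecomposesAt F c) : c ≤ ∑ i, γ i := by
  classical
  obtain ⟨d, g, ⟨δ, hδ0, hδ1, hδ⟩, hg, hgsp, hFd⟩ := hd
  have key : ∀ i, c * δ i ≤ γ i := by
    intro i
    obtain ⟨W, x, y, hxy, hW⟩ := h2 i
    set A := Function.update W i ∅
    set B := Function.update W i {x}
    have hA : A i = ∅ := by simp [A]
    have hB : B i = {x} := by simp [B]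
    have hAB : ∀ j, j ≠ i → A j = B j := by
      intro j hj; simp [A, B, Function.update_of_ne hj]
    have e1 : F (mkP y A B (fun j => True)) y = phi F y B := by
      apply phi_eq hF hsp
      intro j z hz
      rw [mkP_ctr _ _ _ _ _ _ hz]
      by_cases hj : j = i
      · subst hj; rw [hA, hB]; simp
      · rw [hAB j hj]; simp
    have e2 : F (mkP y A B (fun j => j ≠ i)) y = phi F y A := by
      apply phi_eq hF hsp
      intro j z hz
      rw [mkP_ctr _ _ _ _ _ _ hz]
      by_cases hj : j = i
      · subst hj; simp
      · rw [hAB j hj]; simp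
    set Ra := mkP y A B (fun j => True) with hRa
    set Rb := mkP y A B (fun j => j ≠ i) with hRb
    have hsame : ∀ j, j ≠ i → Rb j = Ra j := by
      intro j hj; rw [hRa, hRb]; unfold mkP; simp [hj]
    have hbtop : ∀ z, z ≠ y → Rb i y < Rb i z := by
      intro z hz
      have := mkP_ctr y A B (fun j => j ≠ i) i z hz
      rw [hA] at this
      simp at this
      exact lt_of_le_of_ne this (fun hh => hz ((Rb i).injective hh).symm)
    have hax : Ra i x < Ra i y := by
      rw [hRa, mkP_ctr _ _ _ _ _ _ hxy, hB]; simp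
    have db : dictProb Rb i y = 1 := by
      unfold dictProb
      rw [if_pos]
      intro z
      by_cases hz : z = y
      · rw [hz]
      · exact (hbtop z hz).le
    have da : dictProb Ra i y = 0 := by
      unfold dictProb
      rw [if_neg]
      intro hh
      exact absurd hax (not_lt.2 (hh x))
    have dd : d Rb y - d Ra y = δ i := by
      rw [hδ, hδ, ← Finset.add_sum_erase univ _ (mem_univ i),
        ← Finset.add_sum_erase univ (fun j => δ j * dictProb Ra j y) (mem_univ i), da, db]
      have : ∑ j ∈ univ.erase i, δ j * dictProb Rb j y =
          ∑ j ∈ univ.erase i, δ j * dictProb Ra j y := by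
        apply Finset.sum_congr rfl
        intro j hj
        unfold dictProb
        rw [hsame j (by simpa using hj)]
      rw [this]; ring
    have gg := sp_set hg hgsp Rb Ra i hsame {y} (by
      intro a ha b hb
      simp only [mem_singleton] at ha hb
      subst ha
      exact hbtop b hb)
    simp only [Finset.sum_singleton] at gg
    rw [hW, ← e1, ← e2, hFd, hFd, ← dd]
    have := mul_le_mul_of_nonneg_left gg (sub_nonneg.2 hc1)
    linarith
  calc c = ∑ i, c * δ i := by rw [← Finset.mul_sum, hδ1, mul_one]
    _ ≤ _ := Finset.sum_le_sum (fun i _ => key i)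
/-- For `m ≥ 3` and `ε ∈ [0,1]`, every strategyproof SDS that is
`(1-ε)/m`-ex post efficient is `γ`-randomly dictatorial for some `γ ≥ ε`. -/
theorem expost_implies_randomly_dictatorial (n m : ℕ) (hn : 1 ≤ n) (hm : 3 ≤ m)
    (ε : ℝ) (hε0 : 0 ≤ ε) (hε1 : ε ≤ 1)
    (F : Profile n m → Fin m → ℝ) (hF : IsSDS F) (hsp : Strategyproof F)
    (heff : ExPostEff F ((1 - ε) / (m : ℝ))) :
    ∃ γ : ℝ, ε ≤ γ ∧ RandDictDegree F γ := by
  classical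
  have hm0 : 0 < m := by omega
  have hex : ∀ i : Fin n, ∃ γ : ℝ, (∀ W x y, x ≠ y →
      γ ≤ phi F y (Function.update W i ∅) - phi F y (Function.update W i {x})) ∧
      (∃ W x y, x ≠ y ∧
      γ = phi F y (Function.update W i ∅) - phi F y (Function.update W i {x})) := by
    intro i
    let I := {p : Fin m × Fin m // p.1 ≠ p.2} × (Fin n → Finset (Fin m))
    have : Nonempty I :=
      ⟨(⟨(⟨0, hm0⟩, ⟨1, by omega⟩), by simp⟩, fun _ => ∅)⟩
    obtain ⟨p, hp⟩ := Finite.exists_min (fun p : I =>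
      phi F p.1.1.2 (Function.update p.2 i ∅) - phi F p.1.1.2 (Function.update p.2 i {p.1.1.1}))
    exact ⟨_, fun W x y hxy => hp (⟨(x, y), hxy⟩, W), p.2, p.1.1.1, p.1.1.2, p.1.2, rfl⟩
  choose γ h1 h2 using hex
  have hγ : ∀ i, 0 ≤ γ i := by
    intro i
    obtain ⟨W, x, y, hxy, hW⟩ := h2 i
    have := phi_mono hF hsp y W i {x} ∅ (by simp)
    linarith
  have hle := dict_le hm hF hsp γ h1
  have hdsum : ∀ R : Profile n m, ∑ x, ∑ i, γ i * dictProb R i x = ∑ i, γ i := by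
    intro R
    rw [sum_dict hm0]; simp
  have hs1 : ∑ i, γ i ≤ 1 := by
    have R : Profile n m := fun _ => Equiv.refl _
    rw [← hF.2 R, ← hdsum R]
    exact Finset.sum_le_sum (fun x _ => hle R x)
  have hs0 : 0 ≤ ∑ i, γ i := Finset.sum_nonneg (fun i _ => hγ i)
  set g0 := ∑ i, γ i with hg0
  refine ⟨g0, key_bound hm hF hsp ε heff γ h1 h2, hs0, hs1, ?_,
    fun c _ hc1 hd => max_bound hm0 hF hsp γ h2 c hc1 hd⟩
  obtain ⟨δ, hδ0, hδ1, hδ⟩ : ∃ δ : Fin n → ℝ, (∀ i, 0 ≤ δ i) ∧ ∑ i, δ i = 1 ∧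
      ∀ i, g0 * δ i = γ i := by
    by_cases hz : g0 = 0
    · refine ⟨fun _ => 1 / (n : ℝ), fun _ => by positivity, ?_, ?_⟩
      · have : (n : ℝ) ≠ 0 := by
          have : n ≠ 0 := by omega
          exact_mod_cast this
        simp [this]
      · intro i
        have := (Finset.sum_eq_zero_iff_of_nonneg (fun i _ => hγ i)).1 (hg0.symm.trans hz) i
          (mem_univ i)
        rw [hz, this, zero_mul]
    · refine ⟨fun i => γ i / g0, fun i => div_nonneg (hγ i) hs0, ?_, ?_⟩
      · rw [← Finset.sum_div, ← hg0, div_self hz]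
      · intro i; field_simp
  have hD : ∀ (R : Profile n m) (x : Fin m), g0 * ∑ i, δ i * dictProb R i x = ∑ i, γ i * dictProb R i x := by
    intro R x
    rw [Finset.mul_sum]
    apply Finset.sum_congr rfl
    intro i _
    rw [← hδ i]; ring
  by_cases hone : g0 = 1
  · refine ⟨fun R x => ∑ i, δ i * dictProb R i x, F, ⟨δ, hδ0, hδ1, fun _ _ => rfl⟩, hF, hsp, ?_⟩
    intro R x
    rw [hD, hone]
    have hsum : ∑ x, ∑ i, γ i * dictProb R i x = ∑ x, F R x := by
      rw [hdsum, hF.2, ← hone]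
    have := (Finset.sum_eq_sum_iff_of_le (fun x _ => hle R x)).1 hsum x (mem_univ x)
    linarith
  · have hpos : 0 < 1 - g0 := by
      have := lt_of_le_of_ne hs1 hone
      linarith
    refine ⟨fun R x => ∑ i, δ i * dictProb R i x,
      fun R x => (F R x - ∑ i, γ i * dictProb R i x) / (1 - g0),
      ⟨δ, hδ0, hδ1, fun _ _ => rfl⟩, ⟨?_, ?_⟩, ?_, ?_⟩
    · intro R x
      exact div_nonneg (sub_nonneg.2 (hle R x)) hpos.le
    · intro R
      rw [← Finset.sum_div, Finset.sum_sub_distrib, hdsum, hF.2, div_self hpos.ne']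
    · intro R R' i h x
      have := rest_sp hm0 hF hsp γ hγ h1 R R' i h x
      simp only [← Finset.sum_div]
      exact div_le_div_of_nonneg_right this hpos.le
    · intro R x
      simp only []
      rw [hD]
      field_simp
      ring
end
end
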